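/- arXiv:1806.08351 — 4 statements merged into one kernel-verified Lean document; each statement's English description precedes it below -/
import Mathlib

section
/- Upper bound for the number of vertices: Let ℓ be a positive integer, Q ⊆ ℝ² an ℓ-reflexive polygon with respect to ℤ², and Q* := ℓ·Q° its dual. Then the set of vertices (extreme points) of Q and the set of vertices of Q* are finite of the same cardinality ν, and ν ≤ 6. -/
/-!
The vertices of `Q` are traversed counterclockwise: `EdgeStep ℓ Q v w x` says that `v`, `w` are
consecutive vertices and that `x` is the inner normal of the edge joining them, scaled so that the
edge lies on `⟨x, ·⟩ = -ℓ`. Every vertex starts exactly one edge, and the vertices of the dual are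
exactly these normals, so `v ↦ x` is a bijection from the vertices of `Q` to those of the dual.

For the bound, write `e` for the normal `x` rotated by a quarter turn, so that `det (v, e) = ℓ`.
By reflexivity `e` is a primitive lattice vector. Hence `v_{i+1} - v_i = a_i e_i`, and dually
`e_{i+1} - e_i = -c_i v_{i+1}`, where `a_i` and `c_i` are *positive integers*: the vectors on the
left are lattice vectors parallel to the primitive vectors on the right (`exists_length`,
`exists_dual_length`). Apply `det (v₁, ·) / ℓ` to these recursions. The heights of `v₁, e₁, v₂` are
`0, 1, a₁`, that of `e₂` is `1 - c₁ a₁ ≤ 0`, and if `v₃` still has positive height, that height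
is `1`; then `e₃` has height at most `-1`, and `v₄` has nonpositive height (`height_bound`).
Consequently at most two vertices, the next two successors of `v₁`, lie strictly to the left of
the line `ℝ v₁` (`mem_left`). Let `u` be the first successor of `v₁` that is not strictly to the
left of this line. Each remaining vertex lies strictly to the left of `ℝ u` (`mem_right`), so it is
one of the next two successors of `u`. In total there are at most `1 + 2 + 1 + 2 = 6` vertices.
-/

open Set

noncomputable section

abbrev V : Type := ℝ × ℝ

/-- Standard inner product on ℝ². -/
def dotV (x y : V) : ℝ := x.1 * y.1 + x.2 * y.2

/-- The standard lattice ℤ² viewed inside ℝ². -/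
def latticePts : Set V := {x : V | ∃ p : ℤ × ℤ, x = ((p.1 : ℝ), (p.2 : ℝ))}

/-- A polygon: convex hull of a finite set of points that affinely spans ℝ². -/
def IsPolygon (Q : Set V) : Prop :=
  ∃ A : Finset V, Q = convexHull ℝ (A : Set V) ∧ affineSpan ℝ (A : Set V) = ⊤

/-- An edge of `Q`: a one-dimensional face, i.e. the argmin set of some nonzero
linear functional, containing more than one point. -/
def IsEdge (Q F : Set V) : Prop :=
  (∃ η : V, η ≠ 0 ∧ F = {y ∈ Q | ∀ z ∈ Q, dotV η y ≤ dotV η z}) ∧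
    ∃ y₁ ∈ F, ∃ y₂ ∈ F, y₁ ≠ y₂

/-- A primitive lattice point: the only lattice points on the segment `conv {0, v}`
are `0` and `v`. -/
def IsPrimitive (v : V) : Prop :=
  v ∈ latticePts ∧ v ≠ 0 ∧ segment ℝ (0 : V) v ∩ latticePts = {(0 : V), v}

/-- An ℓ-reflexive polygon with respect to ℤ². -/
structure IsLReflexive (ℓ : ℕ) (Q : Set V) : Prop where
  polygon : IsPolygon Q
  vertices_primitive : ∀ v ∈ Set.extremePoints ℝ Q, IsPrimitive v
  zero_mem_interior : (0 : V) ∈ interior Q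
  edge_cond : ∀ F, IsEdge Q F →
    ∃ η : V, IsPrimitive η ∧ F ⊆ {y : V | dotV η y = -(ℓ : ℝ)}

/-- The polar polygon `Q° = {x | ⟨x,y⟩ ≥ -1 for all y ∈ Q}`. -/
def polarPolygon (Q : Set V) : Set V := {x : V | ∀ y ∈ Q, -1 ≤ dotV x y}

/-- The dual of an ℓ-reflexive polygon: `Q* = ℓ·Q°`. -/
def dualPolygon (ℓ : ℕ) (Q : Set V) : Set V := (fun x : V => (ℓ : ℝ) • x) '' polarPolygon Q

/-- The oriented area (determinant) of a pair of plane vectors. -/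
def wedge (x y : V) : ℝ := x.1 * y.2 - x.2 * y.1

/-- `EdgeStep L Q v w x`: the vertices `v`, `w` of `Q` are the endpoints of an edge, in
counterclockwise order, and `x` is the normal of that edge, scaled so that the edge lies on
`⟨x, ·⟩ = -L`. -/
structure EdgeStep (L : ℝ) (Q : Set V) (v w x : V) : Prop where
  left_mem : v ∈ Set.extremePoints ℝ Q
  right_mem : w ∈ Set.extremePoints ℝ Q
  pos : 0 < wedge v w
  eq_left : dotV x v = -L
  eq_right : dotV x w = -L
  ge : ∀ q ∈ Q, -L ≤ dotV x q

/-! ### Convex geometry in the plane -/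

lemma exists_box {Q : Set V} {c : V} (h : c ∈ interior Q) :
    ∃ ε > 0, ∀ x : V, |x.1 - c.1| ≤ ε → |x.2 - c.2| ≤ ε → x ∈ Q := by
  rw [mem_interior_iff_mem_nhds, Metric.nhds_basis_closedBall.mem_iff] at h
  obtain ⟨ε, hε, hs⟩ := h
  refine ⟨ε, hε, fun x h1 h2 => hs ?_⟩
  rw [Metric.mem_closedBall, Prod.dist_eq, Real.dist_eq, Real.dist_eq]
  exact max_le h1 h2

lemma notMem_interior_of_extreme {Q : Set V} {v : V} (hv : v ∈ Set.extremePoints ℝ Q) :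
    v ∉ interior Q := by
  intro h
  obtain ⟨ε, hε, hb⟩ := exists_box h
  have h1 : ((v.1 + ε, v.2) : V) ∈ Q := hb _ (by simp [abs_of_pos hε]) (by simp [hε.le])
  have h2 : ((v.1 - ε, v.2) : V) ∈ Q := hb _ (by simp [abs_of_pos hε]) (by simp [hε.le])
  have h3 := hv.2 h1 h2 ⟨1/2, 1/2, by norm_num, by norm_num, by norm_num, by
    ext <;> simp <;> ring⟩
  have := congrArg Prod.fst h3
  simp at this
  linarith

lemma extreme_of_combo {Q : Set V} (hc : Convex ℝ Q) (h0 : (0 : V) ∈ interior Q)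
    {u p q : V} (hu : u ∈ Set.extremePoints ℝ Q) (hp : p ∈ Q) (hq : q ∈ Q)
    {α β : ℝ} (hα : 0 ≤ α) (hβ : 0 ≤ β) (hs : α + β ≤ 1) (h : u = α • p + β • q) :
    u = p ∨ u = q := by
  have hT : ({0, p, q} : Set V) ⊆ Q := by
    rintro y (rfl | rfl | rfl)
    exacts [interior_subset h0, hp, hq]
  have hH : convexHull ℝ ({0, p, q} : Set V) ⊆ Q := convexHull_min hT hc
  have hmem : u ∈ convexHull ℝ ({0, p, q} : Set V) := by
    have hcv := convex_convexHull ℝ ({0, p, q} : Set V)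
    have hsub := subset_convexHull ℝ ({0, p, q} : Set V)
    have := hcv.sum_mem (t := Finset.univ) (w := ![1 - α - β, α, β]) (z := ![0, p, q])
      (by intro i _; fin_cases i <;> simp <;> linarith)
      (by simp only [Fin.sum_univ_three, Matrix.cons_val]; ring)
      (by intro i _; fin_cases i <;> simp <;> apply hsub <;> simp)
    rw [h]
    simpa [Fin.sum_univ_three] using this
  have := extremePoints_convexHull_subset
    (inter_extremePoints_subset_extremePoints_of_subset hH ⟨hmem, hu⟩)
  rcases this with h | h | h
  · exact absurd (h ▸ h0) (notMem_interior_of_extreme hu)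
  · exact Or.inl h
  · exact Or.inr h

/-- Cramer's rule in the plane. -/
lemma wedge_combo (u v w : V) (hD : wedge v w ≠ 0) :
    u = (wedge u w / wedge v w) • v + (wedge v u / wedge v w) • w := by
  ext
  · simp only [Prod.fst_add, Prod.smul_fst, smul_eq_mul]
    field_simp
    simp only [wedge]; ring
  · simp only [Prod.snd_add, Prod.smul_snd, smul_eq_mul]
    field_simp
    simp only [wedge]; ring

lemma dotV_combo (x p q : V) (α β : ℝ) :
    dotV x (α • p + β • q) = α * dotV x p + β * dotV x q := by
  simp [dotV]; ring

lemma dotV_ge_of_extreme {Q : Set V} (hh : Q = convexHull ℝ (Set.extremePoints ℝ Q))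
    {x : V} {c : ℝ} (h : ∀ v ∈ Set.extremePoints ℝ Q, c ≤ dotV x v) :
    ∀ q ∈ Q, c ≤ dotV x q := by
  have hcv : Convex ℝ {q : V | c ≤ dotV x q} := by
    intro p hp q hq a b ha hb hab
    simp only [mem_ofPred_eq, dotV_combo] at *
    calc c = a * c + b * c := by rw [← add_mul, hab, one_mul]
      _ ≤ _ := by gcongr
  intro q hq
  rw [hh] at hq
  exact convexHull_min (s := Set.extremePoints ℝ Q) h hcv hq

/-- No vertex lies strictly inside the cone spanned by two consecutive vertices. -/
lemma EdgeStep.mem_cone {L : ℝ} {Q : Set V} (hL : 0 < L) (hc : Convex ℝ Q)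
    (h0 : (0 : V) ∈ interior Q) {v w x u : V} (h : EdgeStep L Q v w x)
    (hu : u ∈ Set.extremePoints ℝ Q) (h1 : 0 ≤ wedge v u) (h2 : 0 ≤ wedge u w) :
    u = v ∨ u = w := by
  have hcomb := wedge_combo u v w h.pos.ne'
  refine extreme_of_combo hc h0 hu h.left_mem.1 h.right_mem.1
    (div_nonneg h2 h.pos.le) (div_nonneg h1 h.pos.le) ?_ hcomb
  have hge := h.ge u hu.1
  rw [hcomb, dotV_combo, h.eq_left, h.eq_right] at hge
  nlinarith

/-- An edge contains no vertices besides its two endpoints. -/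
lemma EdgeStep.eq_of_tight {L : ℝ} {Q : Set V} (hL : 0 < L) (hc : Convex ℝ Q)
    (h0 : (0 : V) ∈ interior Q) {v w x u : V} (h : EdgeStep L Q v w x)
    (hu : u ∈ Set.extremePoints ℝ Q) (ht : dotV x u = -L) : u = v ∨ u = w := by
  have hD := h.pos
  have hcomb := wedge_combo u v w h.pos.ne'
  -- The three vertices are collinear, so the barycentric weights of `u` add up to one.
  have hsum : wedge u w + wedge v u = wedge v w := by
    have := ht
    rw [hcomb, dotV_combo, h.eq_left, h.eq_right] at this
    field_simp at this
    linarith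
  rcases lt_or_ge (wedge v u) 0 with h1 | h1
  · have hp : 0 < wedge u w := by linarith
    have : v = (wedge v w / wedge u w) • u + (-wedge v u / wedge u w) • w := by
      have := wedge_combo v u w hp.ne'
      rwa [show wedge u v = -wedge v u by simp [wedge]; ring] at this
    rcases extreme_of_combo hc h0 h.left_mem hu.1 h.right_mem.1 (by positivity)
      (div_nonneg (by linarith) hp.le) (by rw [← add_div, div_le_one hp]; linarith) this with e | e
    · exact Or.inl e.symm
    · simp [e, wedge] at hD; linarith
  rcases lt_or_ge (wedge u w) 0 with h2 | h2
  · have hp : 0 < wedge v u := by linarith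
    have : w = (-wedge u w / wedge v u) • v + (wedge v w / wedge v u) • u := by
      have := wedge_combo w v u hp.ne'
      rwa [show wedge w u = -wedge u w by simp [wedge]; ring] at this
    rcases extreme_of_combo hc h0 h.right_mem h.left_mem.1 hu.1
      (div_nonneg (by linarith) hp.le) (by positivity)
      (by rw [← add_div, div_le_one hp]; linarith) this with e | e
    · simp [e, wedge] at hD; linarith
    · exact Or.inr e.symm
  exact h.mem_cone hL hc h0 hu h1 h2

lemma EdgeStep.left_unique {L : ℝ} {Q : Set V} (hL : 0 < L) (hc : Convex ℝ Q)
    (h0 : (0 : V) ∈ interior Q) {v w v' w' x : V} (h : EdgeStep L Q v w x)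
    (h' : EdgeStep L Q v' w' x) : v = v' := by
  have hp := h.pos
  have hp' := h'.pos
  rcases h.eq_of_tight hL hc h0 h'.left_mem h'.eq_left with rfl | rfl
  · rfl
  · rcases h.eq_of_tight hL hc h0 h'.right_mem h'.eq_right with rfl | rfl
    · simp only [wedge] at hp hp'; linarith
    · simp only [wedge] at hp'; linarith

/-- A vertex is the first endpoint of at most one edge. -/
lemma EdgeStep.normal_unique {L : ℝ} {Q : Set V} {v w w' x x' : V}
    (h : EdgeStep L Q v w x) (h' : EdgeStep L Q v w' x') : x = x' := by
  -- The difference of the normals is a multiple of the rotated vector `v`; both signs are excluded.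
  have e1 := h.eq_left
  have e2 := h.eq_right
  have e3 := h'.eq_left
  have e4 := h'.eq_right
  have g1 := h.ge _ h'.right_mem.1
  have g2 := h'.ge _ h.right_mem.1
  have hp := h.pos
  have hp' := h'.pos
  have hv : v.1 ^ 2 + v.2 ^ 2 ≠ 0 := by
    intro hz
    have h1 : v.1 = 0 := by nlinarith [sq_nonneg v.1, sq_nonneg v.2]
    have h2 : v.2 = 0 := by nlinarith [sq_nonneg v.1, sq_nonneg v.2]
    simp [wedge, h1, h2] at hp
  obtain ⟨s, hs1, hs2⟩ : ∃ s : ℝ, x'.1 - x.1 = -s * v.2 ∧ x'.2 - x.2 = s * v.1 := by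
    have hd : (x'.1 - x.1) * v.1 + (x'.2 - x.2) * v.2 = 0 := by
      simp only [dotV] at e1 e3; linarith
    refine ⟨((x'.2 - x.2) * v.1 - (x'.1 - x.1) * v.2) / (v.1 ^ 2 + v.2 ^ 2), ?_, ?_⟩
    · field_simp
      linear_combination v.1 * hd
    · field_simp
      linear_combination v.2 * hd
  have k1 : dotV x' w - dotV x w = s * wedge v w := by
    simp only [dotV, wedge]; linear_combination w.1 * hs1 + w.2 * hs2
  have k2 : dotV x' w' - dotV x w' = s * wedge v w' := by
    simp only [dotV, wedge]; linear_combination w'.1 * hs1 + w'.2 * hs2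
  have hs0 : s = 0 := by
    apply le_antisymm
    · by_contra! hs
      have := mul_pos hs hp'
      linarith
    · by_contra! hs
      have := mul_neg_of_neg_of_pos hs hp
      linarith
  subst hs0
  ext <;> linarith

lemma exists_supporting {L : ℝ} {Q : Set V} (hL : 0 < L) (hc : Convex ℝ Q)
    (h0 : (0 : V) ∈ interior Q) {v : V} (hv : v ∈ Set.extremePoints ℝ Q) :
    ∃ x : V, dotV x v = -L ∧ ∀ q ∈ Q, -L ≤ dotV x q := by
  obtain ⟨f, hf⟩ := geometric_hahn_banach_open_point hc.interior isOpen_interior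
    (notMem_interior_of_extreme hv)
  have hfv : 0 < f v := by simpa using hf 0 h0
  have hle : ∀ q ∈ Q, f q ≤ f v := by
    intro q hq
    have hq' : q ∈ closure (interior Q) := by
      rw [hc.closure_interior_eq_closure_of_nonempty_interior ⟨0, h0⟩]
      exact subset_closure hq
    exact closure_minimal (fun a ha => (hf a ha).le)
      (isClosed_le f.continuous continuous_const) hq'
  have hlin : ∀ q : V, f q = q.1 * f (1, 0) + q.2 * f (0, 1) := by
    intro q
    have : q = q.1 • ((1, 0) : V) + q.2 • ((0, 1) : V) := by ext <;> simp
    conv_lhs => rw [this, map_add, map_smul, map_smul, smul_eq_mul, smul_eq_mul]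
  have key : ∀ q : V, dotV (-L / f v * f (1, 0), -L / f v * f (0, 1)) q = -L * (f q / f v) := by
    intro q
    rw [hlin q]
    simp only [dotV]
    ring
  refine ⟨_, (key v).trans (by field_simp), fun q hq => ?_⟩
  rw [key]
  have : f q / f v ≤ 1 := (div_le_one hfv).2 (hle q hq)
  nlinarith

/-- Every vertex has a successor: rotate a supporting line at `v` until it meets a further
vertex. -/
lemma exists_edgeStep {L : ℝ} {Q : Set V} (hL : 0 < L)
    (hh : Q = convexHull ℝ (Set.extremePoints ℝ Q)) (hfin : (Set.extremePoints ℝ Q).Finite)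
    (h0 : (0 : V) ∈ interior Q) {v : V} (hv : v ∈ Set.extremePoints ℝ Q) :
    ∃ w x, EdgeStep L Q v w x := by
  have hc : Convex ℝ Q := hh ▸ convex_convexHull ℝ _
  obtain ⟨x₀, hx₀v, hx₀⟩ := exists_supporting hL hc h0 hv
  have hv2 : 0 < v.1 ^ 2 + v.2 ^ 2 := by
    by_contra! hle
    have h1 : v.1 = 0 := by nlinarith [sq_nonneg v.1, sq_nonneg v.2]
    have h2 : v.2 = 0 := by nlinarith [sq_nonneg v.1, sq_nonneg v.2]
    simp [dotV, h1, h2] at hx₀v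
    exact hL.ne' hx₀v
  have hne : {w ∈ Set.extremePoints ℝ Q | 0 < wedge v w}.Nonempty := by
    by_contra hemp
    have hall : ∀ w ∈ Set.extremePoints ℝ Q, 0 ≤ dotV (v.2, -v.1) w := by
      intro w hw
      by_contra! hneg
      exact hemp ⟨w, hw, by simp only [dotV, wedge] at *; linarith⟩
    have hall' := dotV_ge_of_extreme hh hall
    obtain ⟨ε, hε, hb⟩ := exists_box h0
    have hM : 0 < |v.1| + |v.2| + 1 := by positivity
    have hin := hall' (-(ε / (|v.1| + |v.2| + 1)) * v.2, ε / (|v.1| + |v.2| + 1) * v.1)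
      (hb _ ?_ ?_)
    · have : 0 < ε / (|v.1| + |v.2| + 1) := by positivity
      simp only [dotV] at hin
      nlinarith
    · simp only [Prod.fst_zero, sub_zero, abs_mul, abs_neg, abs_div, abs_of_pos hε, abs_of_pos hM]
      rw [div_mul_eq_mul_div, div_le_iff₀ hM]
      nlinarith [abs_nonneg v.1, abs_nonneg v.2]
    · simp only [Prod.snd_zero, sub_zero, abs_mul, abs_div, abs_of_pos hε, abs_of_pos hM]
      rw [div_mul_eq_mul_div, div_le_iff₀ hM]
      nlinarith [abs_nonneg v.1, abs_nonneg v.2]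
  obtain ⟨w, ⟨hw, hpos⟩, hmax⟩ := Set.exists_max_image _ (fun w => (-L - dotV x₀ w) / wedge v w)
    (hfin.subset (sep_subset _ _)) hne
  -- The rotated functional `x₀ + t ⟨v^⊥, ·⟩`, with the least `t` that keeps it tight and valid.
  set t := (-L - dotV x₀ w) / wedge v w with ht
  have hdot : ∀ q, dotV (x₀.1 - t * v.2, x₀.2 + t * v.1) q = dotV x₀ q + t * wedge v q := by
    intro q; simp only [dotV, wedge]; ring
  refine ⟨w, (x₀.1 - t * v.2, x₀.2 + t * v.1), hv, hw, hpos, ?_, ?_, dotV_ge_of_extreme hh ?_⟩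
  · rw [hdot, hx₀v]; simp only [wedge]; ring
  · rw [hdot, ht]; field_simp; ring
  · intro q hq
    rw [hdot]
    have hx := hx₀ q hq.1
    rcases lt_or_ge 0 (wedge v q) with hq' | hq'
    · have := hmax q ⟨hq, hq'⟩
      rw [div_le_iff₀ hq'] at this
      linarith
    · have ht0 : t ≤ 0 := div_nonpos_of_nonpos_of_nonneg (by linarith [hx₀ w hw.1]) hpos.le
      nlinarith

/-! ### Vertices of the dual polygon -/

lemma mem_dualPolygon {ℓ : ℕ} (hℓ : 0 < ℓ) {Q : Set V} {x : V} :
    x ∈ dualPolygon ℓ Q ↔ ∀ q ∈ Q, -(ℓ : ℝ) ≤ dotV x q := by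
  have hL : (0 : ℝ) < ℓ := by exact_mod_cast hℓ
  constructor
  · rintro ⟨y, hy, rfl⟩ q hq
    have := hy q hq
    have e : dotV ((ℓ : ℝ) • y) q = ℓ * dotV y q := by simp [dotV]; ring
    simp only [e]
    nlinarith
  · intro h
    refine ⟨(ℓ : ℝ)⁻¹ • x, fun q hq => ?_, by simp [smul_smul, hL.ne']⟩
    have e : dotV ((ℓ : ℝ)⁻¹ • x) q = dotV x q / ℓ := by simp [dotV]; field_simp
    rw [e, le_div_iff₀ hL]
    linarith [h q hq]

/-- A vertex of the dual is a normal that is tight at two independent vertices of `Q`; otherwise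
it could be moved both ways along a direction orthogonal to all its tight vertices. -/
lemma extreme_dual_iff {ℓ : ℕ} (hℓ : 0 < ℓ) {Q : Set V}
    (hh : Q = convexHull ℝ (Set.extremePoints ℝ Q)) (hfin : (Set.extremePoints ℝ Q).Finite)
    {x : V} : x ∈ Set.extremePoints ℝ (dualPolygon ℓ Q) ↔ ∃ v w, EdgeStep ℓ Q v w x := by
  have hL : (0 : ℝ) < ℓ := by exact_mod_cast hℓ
  constructor
  · intro hx
    have hge := (mem_dualPolygon hℓ).1 hx.1
    by_contra! hno
    have hpar : ∀ v ∈ Set.extremePoints ℝ Q, ∀ w ∈ Set.extremePoints ℝ Q,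
        dotV x v = -ℓ → dotV x w = -ℓ → wedge v w = 0 := by
      intro v hv w hw ev ew
      rcases lt_trichotomy (wedge v w) 0 with h | h | h
      · exact absurd ⟨hw, hv, by simp only [wedge] at *; linarith, ew, ev, hge⟩ (hno w v)
      · exact h
      · exact absurd ⟨hv, hw, h, ev, ew, hge⟩ (hno v w)
    obtain ⟨d, hd0, hd⟩ : ∃ d : V, d ≠ 0 ∧
        ∀ w ∈ Set.extremePoints ℝ Q, dotV x w = -ℓ → dotV d w = 0 := by
      by_cases hex : ∃ v ∈ Set.extremePoints ℝ Q, dotV x v = -ℓ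
      · obtain ⟨v, hv, ev⟩ := hex
        refine ⟨(-v.2, v.1), ?_, fun w hw ew => ?_⟩
        · intro hz
          rw [Prod.ext_iff] at hz
          simp at hz
          simp [dotV, hz.1, hz.2] at ev
          omega
        · have := hpar v hv w hw ev ew
          simp only [wedge] at this
          simp only [dotV]; linarith
      · push Not at hex
        exact ⟨(1, 0), by simp [Prod.ext_iff], fun w hw ew => absurd ew (hex w hw)⟩
    -- A step size that respects the finitely many constraints with positive slack.
    obtain ⟨ε, hε, hstep⟩ : ∃ ε > 0, ∀ w ∈ Set.extremePoints ℝ Q,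
        ε * |dotV d w| ≤ dotV x w + ℓ := by
      have hall : ∀ w ∈ Set.extremePoints ℝ Q, ∀ᶠ ε in nhdsWithin (0 : ℝ) (Ioi 0),
          ε * |dotV d w| ≤ dotV x w + ℓ := by
        intro w hw
        by_cases ew : dotV x w = -ℓ
        · simp [hd w hw ew, ew]
        · have hlt : 0 < dotV x w + ℓ :=
            lt_of_le_of_ne (by linarith [hge w hw.1]) (fun h => ew (by linarith))
          have hcont : Filter.Tendsto (fun ε : ℝ => ε * |dotV d w|)
              (nhdsWithin 0 (Ioi 0)) (nhds (0 * |dotV d w|)) :=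
            ((continuous_id.mul continuous_const).tendsto 0).mono_left nhdsWithin_le_nhds
          rw [zero_mul] at hcont
          exact (hcont.eventually (gt_mem_nhds hlt)).mono fun _ h => le_of_lt h
      have := (hfin.eventually_all (l := nhdsWithin (0 : ℝ) (Ioi 0))).2 hall
      obtain ⟨ε, h1, h2⟩ := (this.and self_mem_nhdsWithin).exists
      exact ⟨ε, h2, h1⟩
    have hmem : ∀ s : ℝ, |s| = ε → x + s • d ∈ dualPolygon ℓ Q := by
      intro s hs
      refine (mem_dualPolygon hℓ).2 (dotV_ge_of_extreme hh fun w hw => ?_)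
      have e : dotV (x + s • d) w = dotV x w + s * dotV d w := by simp [dotV]; ring
      have := hstep w hw
      rw [← hs, ← abs_mul] at this
      rw [e]
      linarith [neg_abs_le (s * dotV d w)]
    have := hx.2 (hmem ε (abs_of_pos hε)) (hmem (-ε) (by rw [abs_neg, abs_of_pos hε]))
      ⟨1/2, 1/2, by norm_num, by norm_num, by norm_num, by ext <;> simp <;> ring⟩
    simp [hε.ne', hd0] at this
  · rintro ⟨v, w, h⟩
    refine ⟨(mem_dualPolygon hℓ).2 h.ge, ?_⟩
    rintro y hy z hz ⟨a, b, ha, hb, hab, hx⟩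
    rw [mem_dualPolygon hℓ] at hy hz
    have tight : ∀ q ∈ Q, dotV x q = -ℓ → dotV y q = -ℓ := by
      intro q hq e
      have e' : dotV x q = a * dotV y q + b * dotV z q := by
        rw [← hx]; simp [dotV]; ring
      have h1 := hy q hq
      have h2 := hz q hq
      have hb' : b = 1 - a := by linarith
      subst hb'
      nlinarith
    have e1 := tight v h.left_mem.1 h.eq_left
    have e2 := tight w h.right_mem.1 h.eq_right
    have e3 := h.eq_left
    have e4 := h.eq_right
    have hp := h.pos.ne'
    simp only [dotV] at e1 e2 e3 e4
    ext
    · apply mul_right_cancel₀ hp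
      simp only [wedge]
      linear_combination w.2 * (e1 - e3) - v.2 * (e2 - e4)
    · apply mul_right_cancel₀ hp
      simp only [wedge]
      linear_combination v.1 * (e2 - e4) - w.1 * (e1 - e3)

/-! ### Arithmetic of consecutive edges -/

lemma IsPrimitive.exists_int {v : V} (h : IsPrimitive v) :
    ∃ a b : ℤ, v = ((a : ℝ), (b : ℝ)) ∧ IsCoprime a b := by
  obtain ⟨⟨⟨a, b⟩, rfl⟩, hne, hseg⟩ := h
  refine ⟨a, b, rfl, ?_⟩
  rw [Int.isCoprime_iff_gcd_eq_one]
  have hg0 : Int.gcd a b ≠ 0 := by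
    intro h0
    rw [Int.gcd_eq_zero_iff] at h0
    simp [h0.1, h0.2] at hne
  obtain ⟨a', ha⟩ := Int.gcd_dvd_left a b
  obtain ⟨b', hb⟩ := Int.gcd_dvd_right a b
  set g := Int.gcd a b with hg
  have hgpos : (0 : ℝ) < g := by exact_mod_cast Nat.pos_of_ne_zero hg0
  have hg1 : (1 : ℝ) ≤ g := by exact_mod_cast Nat.pos_of_ne_zero hg0
  have haR : (a : ℝ) = g * a' := by exact_mod_cast ha
  have hbR : (b : ℝ) = g * b' := by exact_mod_cast hb
  have hmem : (((a' : ℝ), (b' : ℝ)) : V) ∈ segment ℝ (0 : V) ((a : ℝ), (b : ℝ)) ∩ latticePts := by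
    refine ⟨⟨1 - (g : ℝ)⁻¹, (g : ℝ)⁻¹, ?_, by positivity, by ring, ?_⟩, ⟨(a', b'), rfl⟩⟩
    · linarith [inv_le_one_of_one_le₀ hg1]
    · ext
      · simp [haR, hgpos.ne']
      · simp [hbR, hgpos.ne']
  simp only at hseg
  rw [hseg] at hmem
  rcases hmem with h | h
  · simp [Prod.ext_iff] at h
    simp [ha, hb, h.1, h.2] at hne
  · simp only [mem_singleton_iff, Prod.mk.injEq, Int.cast_inj] at h
    have hh : (g : ℝ) = 1 := by
      by_contra hgn
      apply hne
      have e1 : (a : ℝ) = g * a := by rw [h.1] at haR; exact haR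
      have e2 : (b : ℝ) = g * b := by rw [h.2] at hbR; exact hbR
      have hgn' : (g : ℝ) - 1 ≠ 0 := sub_ne_zero.2 hgn
      ext
      · exact (mul_eq_zero.1 (show ((g : ℝ) - 1) * a = 0 by linarith)).resolve_left hgn'
      · exact (mul_eq_zero.1 (show ((g : ℝ) - 1) * b = 0 by linarith)).resolve_left hgn'
    exact_mod_cast hh

/-- A lattice vector parallel to a primitive vector is an integer multiple of it. -/
lemma IsPrimitive.exists_mul {v : V} (h : IsPrimitive v) (p q : ℤ)
    (hw : wedge v ((p : ℝ), (q : ℝ)) = 0) :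
    ∃ k : ℤ, (p : ℝ) = k * v.1 ∧ (q : ℝ) = k * v.2 := by
  obtain ⟨a, b, rfl, s, t, hst⟩ := h.exists_int
  simp only [wedge] at hw
  have hw' : a * q - b * p = 0 := by exact_mod_cast hw
  refine ⟨s * p + t * q, ?_, ?_⟩
  · have : p = (s * p + t * q) * a := by linear_combination -p * hst - t * hw'
    simpa using congrArg (Int.cast : ℤ → ℝ) this
  · have : q = (s * p + t * q) * b := by linear_combination -q * hst + s * hw'
    simpa using congrArg (Int.cast : ℤ → ℝ) this

/-- The normals of the edges, scaled to height `ℓ`, are primitive lattice points. -/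
lemma EdgeStep.primitive_normal {ℓ : ℕ} (hℓ : 0 < ℓ) {Q : Set V} (hQ : IsLReflexive ℓ Q)
    {v w x : V} (h : EdgeStep ℓ Q v w x) : IsPrimitive x := by
  have hL : (0 : ℝ) < ℓ := by exact_mod_cast hℓ
  have e3 := h.eq_left
  have e4 := h.eq_right
  have hp := h.pos
  obtain ⟨η, hη, hF⟩ := hQ.edge_cond {y ∈ Q | ∀ z ∈ Q, dotV x y ≤ dotV x z} ⟨⟨x, by
      rintro rfl
      simp [dotV] at e3
      omega, rfl⟩, v, ⟨h.left_mem.1, fun z hz => e3 ▸ h.ge z hz⟩, w,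
      ⟨h.right_mem.1, fun z hz => e4 ▸ h.ge z hz⟩, by
      rintro rfl
      simp only [wedge] at hp
      linarith⟩
  have e1 : dotV η v = -ℓ := hF ⟨h.left_mem.1, fun z hz => e3 ▸ h.ge z hz⟩
  have e2 : dotV η w = -ℓ := hF ⟨h.right_mem.1, fun z hz => e4 ▸ h.ge z hz⟩
  suffices η = x from this ▸ hη
  have hp' := hp.ne'
  simp only [dotV] at e1 e2 e3 e4
  ext
  · apply mul_right_cancel₀ hp'
    simp only [wedge]
    linear_combination w.2 * (e1 - e3) - v.2 * (e2 - e4)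
  · apply mul_right_cancel₀ hp'
    simp only [wedge]
    linear_combination v.1 * (e2 - e4) - w.1 * (e1 - e3)

/-- An edge vector is a positive integer multiple of the rotated normal. -/
lemma EdgeStep.exists_length {ℓ : ℕ} (hℓ : 0 < ℓ) {Q : Set V} (hQ : IsLReflexive ℓ Q)
    {v w x : V} (h : EdgeStep ℓ Q v w x) :
    ∃ a : ℤ, 0 < a ∧ w.1 - v.1 = a * x.2 ∧ w.2 - v.2 = -(a * x.1) := by
  have hL : (0 : ℝ) < ℓ := by exact_mod_cast hℓ
  obtain ⟨⟨p, hv⟩, -⟩ := hQ.vertices_primitive v h.left_mem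
  obtain ⟨⟨q, hw⟩, -⟩ := hQ.vertices_primitive w h.right_mem
  have e3 := h.eq_left
  have e4 := h.eq_right
  have hp := h.pos
  obtain ⟨k, h1, h2⟩ := (h.primitive_normal hℓ hQ).exists_mul (-(q.2 - p.2)) (q.1 - p.1) (by
    simp only [dotV] at e3 e4
    simp only [hv, hw] at e3 e4
    push_cast
    simp only [wedge]
    linarith)
  have k1 : w.1 - v.1 = k * x.2 := by rw [← h2, hv, hw]; push_cast; ring
  have k2 : w.2 - v.2 = -(k * x.1) := by rw [← h1, hv, hw]; push_cast; ring
  refine ⟨k, ?_, k1, k2⟩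
  have hk : wedge v w = k * ℓ := by
    simp only [dotV] at e3
    simp only [wedge]
    linear_combination v.1 * k2 - v.2 * k1 - k * e3
  rw [hk] at hp
  have := pos_of_mul_pos_left hp hL.le
  exact_mod_cast this

/-- The dual statement: consecutive normals differ by a positive integer multiple of the rotated
common vertex. -/
lemma EdgeStep.exists_dual_length {ℓ : ℕ} (hℓ : 0 < ℓ) {Q : Set V} (hQ : IsLReflexive ℓ Q)
    (hc : Convex ℝ Q) {u v w x y : V} (h : EdgeStep ℓ Q u v x) (h' : EdgeStep ℓ Q v w y) :
    ∃ c : ℤ, 0 < c ∧ y.1 - x.1 = c * v.2 ∧ y.2 - x.2 = -(c * v.1) := by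
  have hL : (0 : ℝ) < ℓ := by exact_mod_cast hℓ
  obtain ⟨⟨p, hx⟩, -⟩ := h.primitive_normal hℓ hQ
  obtain ⟨⟨q, hy⟩, -⟩ := h'.primitive_normal hℓ hQ
  have e3 := h.eq_right
  have e4 := h'.eq_left
  have hp := h.pos
  have hp' := h'.pos
  obtain ⟨k, h1, h2⟩ := (hQ.vertices_primitive v h.right_mem).exists_mul
    (-(q.2 - p.2)) (q.1 - p.1) (by
    simp only [dotV] at e3 e4
    simp only [hx, hy] at e3 e4
    push_cast
    simp only [wedge]
    linarith)
  have k1 : y.1 - x.1 = k * v.2 := by rw [← h2, hx, hy]; push_cast; ring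
  have k2 : y.2 - x.2 = -(k * v.1) := by rw [← h1, hx, hy]; push_cast; ring
  refine ⟨k, ?_, k1, k2⟩
  have hk : dotV x w = -ℓ + k * wedge v w := by
    have e5 := h'.eq_right
    simp only [dotV] at e5 ⊢
    simp only [wedge]
    linear_combination e5 - w.1 * k1 - w.2 * k2
  have hge := h.ge w h'.right_mem.1
  have hk0 : 0 ≤ (k : ℝ) := by
    by_contra! hneg
    have := mul_neg_of_neg_of_pos hneg hp'
    linarith
  have hkne : (k : ℝ) ≠ 0 := by
    intro hz
    rw [hz, zero_mul, add_zero] at hk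
    rcases h.eq_of_tight hL hc hQ.zero_mem_interior h'.right_mem hk with e | e
    · rw [e] at hp'
      simp only [wedge] at hp hp'
      linarith
    · rw [e] at hp'
      simp only [wedge] at hp'
      linarith
  exact_mod_cast lt_of_le_of_ne hk0 hkne.symm

/-- Among four consecutive vertices, `v₃` or `v₄` does not lie strictly to the left of the line
`ℝ v₁`. Divided by `ℓ`, the heights over this line are integers satisfying a recursion in the
positive edge lengths of `Q` and of its dual. -/
lemma height_bound {ℓ : ℕ} (hℓ : 0 < ℓ) {Q : Set V} (hQ : IsLReflexive ℓ Q) (hc : Convex ℝ Q)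
    {v₁ v₂ v₃ v₄ x y z : V} (h₁ : EdgeStep ℓ Q v₁ v₂ x) (h₂ : EdgeStep ℓ Q v₂ v₃ y)
    (h₃ : EdgeStep ℓ Q v₃ v₄ z) : wedge v₁ v₃ ≤ 0 ∨ wedge v₁ v₄ ≤ 0 := by
  have hL : (0 : ℝ) < ℓ := by exact_mod_cast hℓ
  obtain ⟨a, ha, a1, a2⟩ := h₁.exists_length hℓ hQ
  obtain ⟨b, hb, b1, b2⟩ := h₂.exists_length hℓ hQ
  obtain ⟨d, hd, d1, d2⟩ := h₃.exists_length hℓ hQ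
  obtain ⟨c, hcp, c1, c2⟩ := h₁.exists_dual_length hℓ hQ hc h₂
  obtain ⟨e, he, e1, e2⟩ := h₂.exists_dual_length hℓ hQ hc h₃
  have t := h₁.eq_left
  simp only [dotV] at t
  have H2 : wedge v₁ v₂ = a * ℓ := by
    simp only [wedge]; linear_combination v₁.1 * a2 - v₁.2 * a1 - a * t
  have E2 : -dotV y v₁ = (1 - c * a : ℤ) * ℓ := by
    simp only [dotV]; simp only [wedge] at H2; push_cast
    linear_combination -t - v₁.1 * c1 - v₁.2 * c2 - c * H2
  have H3 : wedge v₁ v₃ = (a + b * (1 - c * a) : ℤ) * ℓ := by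
    simp only [wedge] at H2 ⊢; simp only [dotV] at E2; push_cast at E2 ⊢
    linear_combination v₁.1 * b2 - v₁.2 * b1 + H2 + b * E2
  have E3 : -dotV z v₁ = (1 - c * a - e * (a + b * (1 - c * a)) : ℤ) * ℓ := by
    simp only [dotV] at E2 ⊢; simp only [wedge] at H3; push_cast at E2 H3 ⊢
    linear_combination E2 - v₁.1 * e1 - v₁.2 * e2 - e * H3
  have H4 : wedge v₁ v₄ = (a + b * (1 - c * a)
      + d * (1 - c * a - e * (a + b * (1 - c * a))) : ℤ) * ℓ := by
    simp only [wedge] at H3 ⊢; simp only [dotV] at E3; push_cast at E3 H3 ⊢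
    linear_combination v₁.1 * d2 - v₁.2 * d1 + H3 + d * E3
  rw [H3, H4]
  suffices hz : a + b * (1 - c * a) ≤ 0 ∨
      a + b * (1 - c * a) + d * (1 - c * a - e * (a + b * (1 - c * a))) ≤ 0 by
    rcases hz with hz | hz
    · exact Or.inl (mul_nonpos_of_nonpos_of_nonneg (by exact_mod_cast hz) hL.le)
    · exact Or.inr (mul_nonpos_of_nonpos_of_nonneg (by exact_mod_cast hz) hL.le)
  by_contra! hcon
  obtain ⟨p3, p4⟩ := hcon
  have hac : a ≤ c * a := by nlinarith
  -- The height of the third vertex is at most one.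
  have hV : a + b * (1 - c * a) ≤ 1 := by nlinarith
  have hV1 : a + b * (1 - c * a) = 1 := by omega
  rw [hV1] at p4
  have : 1 - c * a - e * 1 ≤ -1 := by omega
  nlinarith

/-! ### Counting the vertices -/

/-- The Plücker relation for four plane vectors. -/
lemma pluecker (a b c d : V) :
    wedge a b * wedge c d - wedge a c * wedge b d + wedge a d * wedge b c = 0 := by
  simp only [wedge]; ring

/-- A vertex in the half-plane to the left of `v` that is neither `v` nor its successor `w` lies
strictly to the left of `w`. -/
lemma EdgeStep.lt_of_ne {L : ℝ} {Q : Set V} (hL : 0 < L) (hc : Convex ℝ Q)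
    (h0 : (0 : V) ∈ interior Q) {v w x u : V} (h : EdgeStep L Q v w x)
    (hu : u ∈ Set.extremePoints ℝ Q) (hv : u ≠ v) (hw : u ≠ w) (h1 : 0 ≤ wedge v u) :
    0 < wedge w u := by
  by_contra! hle
  rcases h.mem_cone hL hc h0 hu h1 (by simp only [wedge] at *; linarith) with e | e
  · exact hv e
  · exact hw e

/-- The vertices strictly to the left of the line through a vertex `v₁` are among its next two
successors. -/
lemma mem_left {ℓ : ℕ} (hℓ : 0 < ℓ) {Q : Set V} (hQ : IsLReflexive ℓ Q) (hc : Convex ℝ Q)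
    {v₁ v₂ v₃ v₄ x y z u : V} (h₁ : EdgeStep ℓ Q v₁ v₂ x) (h₂ : EdgeStep ℓ Q v₂ v₃ y)
    (h₃ : EdgeStep ℓ Q v₃ v₄ z) (hu : u ∈ Set.extremePoints ℝ Q) (hpos : 0 < wedge v₁ u) :
    u = v₂ ∨ u = v₃ := by
  have hL : (0 : ℝ) < ℓ := by exact_mod_cast hℓ
  have h0 := hQ.zero_mem_interior
  -- Otherwise `u` lies strictly to the left of each of `v₁, v₂, v₃`, and of `v₄` if `v₃` is to the
  -- left of `v₁`; the Plücker relation forbids this once the sequence has crossed the line `ℝ v₁`.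
  by_contra! hne
  have hu1 : u ≠ v₁ := by
    rintro rfl
    simp only [wedge] at hpos; linarith
  have g2 := h₁.lt_of_ne hL hc h0 hu hu1 hne.1 hpos.le
  have g3 := h₂.lt_of_ne hL hc h0 hu hne.1 hne.2 g2.le
  by_cases h13 : wedge v₁ v₃ ≤ 0
  · have := pluecker v₁ v₂ v₃ u
    nlinarith [mul_pos h₁.pos g3, mul_pos hpos h₂.pos]
  · have h14 := (height_bound hℓ hQ hc h₁ h₂ h₃).resolve_left h13
    push Not at h13
    have hu4 : u ≠ v₄ := by
      rintro rfl
      linarith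
    have g4 := h₃.lt_of_ne hL hc h0 hu hne.2 hu4 g3.le
    have := pluecker v₁ v₃ v₄ u
    nlinarith [mul_pos h13 g4, mul_pos hpos h₃.pos]

/-- If `u` is the first successor of `v₁` that is not strictly to its left, with predecessor `p`,
then any vertex not strictly left of `v₁` is `v₁`, `u`, or strictly left of `u`. -/
lemma mem_right {L : ℝ} {Q : Set V} (hL : 0 < L) (hc : Convex ℝ Q)
    (h0 : (0 : V) ∈ interior Q) {v₁ p u x w : V} (hv₁ : v₁ ∈ Set.extremePoints ℝ Q)
    (h : EdgeStep L Q p u x) (hp : 0 < wedge v₁ p) (hu : wedge v₁ u ≤ 0)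
    (hw : w ∈ Set.extremePoints ℝ Q) (hle : wedge v₁ w ≤ 0) :
    w = v₁ ∨ w = u ∨ 0 < wedge u w := by
  by_contra! hne
  obtain ⟨n1, n2, n3⟩ := hne
  have hpu := h.pos
  have n4 : wedge p w < 0 := by
    by_contra! hge
    refine n3.not_gt (h.lt_of_ne hL hc h0 hw ?_ n2 hge)
    rintro rfl
    linarith
  have hpl := pluecker v₁ p u w
  have t1 : wedge v₁ p * wedge u w ≤ 0 := by nlinarith
  have t2 : 0 ≤ wedge v₁ u * wedge p w := by nlinarith
  have t3 : wedge v₁ w * wedge p u ≤ 0 := by nlinarith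
  have z3 : wedge v₁ w = 0 :=
    (mul_eq_zero.1 (show wedge v₁ w * wedge p u = 0 by linarith)).resolve_right hpu.ne'
  -- Thus `w` lies on the ray through `v₁`, where only one vertex can lie.
  have hw' : w = (wedge w p / wedge v₁ p) • v₁ := by
    have := wedge_combo w v₁ p hp.ne'
    rw [z3] at this
    simpa using this
  have hmw : 0 < wedge w p / wedge v₁ p :=
    div_pos (by simp only [wedge] at *; linarith) hp
  set μ := wedge w p / wedge v₁ p with hμ
  rcases le_total μ 1 with h1 | h1
  · rcases extreme_of_combo hc h0 hw hv₁.1 hv₁.1 hmw.le le_rfl (by linarith)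
      (show w = μ • v₁ + (0 : ℝ) • v₁ by rw [← hw']; simp) with e | e <;> exact n1 e
  · have hv' : v₁ = μ⁻¹ • w := by
      calc v₁ = μ⁻¹ • (μ • v₁) := (inv_smul_smul₀ hmw.ne' _).symm
        _ = μ⁻¹ • w := by rw [← hw']
    rcases extreme_of_combo hc h0 hv₁ hw.1 hw.1 (inv_nonneg.2 hmw.le) le_rfl
      (by linarith [inv_le_one_of_one_le₀ h1])
      (show v₁ = μ⁻¹ • w + (0 : ℝ) • w by rw [← hv']; simp) with e | e <;> exact n1 e.symm

/-- **Upper bound for the number of vertices** of an ℓ-reflexive polygon and its dual. -/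
theorem vertex_number_bound (ℓ : ℕ) (hℓ : 0 < ℓ) (Q : Set V) (hQ : IsLReflexive ℓ Q) :
    (Set.extremePoints ℝ Q).Finite ∧
    (Set.extremePoints ℝ (dualPolygon ℓ Q)).Finite ∧
    (Set.extremePoints ℝ Q).ncard = (Set.extremePoints ℝ (dualPolygon ℓ Q)).ncard ∧
    (Set.extremePoints ℝ Q).ncard ≤ 6 := by
  classical
  have hL : (0 : ℝ) < ℓ := by exact_mod_cast hℓ
  have h0 := hQ.zero_mem_interior
  obtain ⟨A, hA, -⟩ := hQ.polygon
  have hc : Convex ℝ Q := hA ▸ convex_convexHull ℝ _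
  have hcomp : IsCompact Q := hA ▸ A.finite_toSet.isCompact_convexHull ℝ
  have hfin : (Set.extremePoints ℝ Q).Finite := by
    refine A.finite_toSet.subset ?_
    rw [hA]
    exact extremePoints_convexHull_subset
  have hh : Q = convexHull ℝ (Set.extremePoints ℝ Q) := by
    rw [← (hfin.isClosed_convexHull ℝ).closure_eq, closure_convexHull_extremePoints hcomp hc]
  have hex : ∀ v ∈ Set.extremePoints ℝ Q, ∃ w x, EdgeStep ℓ Q v w x :=
    fun v hv => exists_edgeStep hL hh hfin h0 hv
  choose! N X hN using hex
  have hbij : Set.BijOn X (Set.extremePoints ℝ Q) (Set.extremePoints ℝ (dualPolygon ℓ Q)) := by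
    refine ⟨fun v hv => (extreme_dual_iff hℓ hh hfin).2 ⟨v, N v, hN v hv⟩, ?_, ?_⟩
    · intro v hv v' hv' e
      have h' := hN v' hv'
      rw [← e] at h'
      exact (hN v hv).left_unique hL hc h0 h'
    · intro x hx
      obtain ⟨v, w, h⟩ := (extreme_dual_iff hℓ hh hfin).1 hx
      exact ⟨v, h.left_mem, (hN v h.left_mem).normal_unique h⟩
  refine ⟨hfin, hbij.finite_iff_finite.1 hfin, hbij.ncard_eq, ?_⟩
  have hNm : ∀ v ∈ Set.extremePoints ℝ Q, N v ∈ Set.extremePoints ℝ Q :=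
    fun v hv => (hN v hv).right_mem
  have hleft : ∀ v ∈ Set.extremePoints ℝ Q, ∀ w ∈ Set.extremePoints ℝ Q, 0 < wedge v w →
      w = N v ∨ w = N (N v) := fun v hv w hw hp =>
    mem_left hℓ hQ hc (hN v hv) (hN _ (hNm v hv)) (hN _ (hNm _ (hNm v hv))) hw hp
  rcases (Set.extremePoints ℝ Q).eq_empty_or_nonempty with hemp | ⟨v, hv⟩
  · simp [hemp]
  obtain ⟨p, hp, hvp, hvu⟩ : ∃ p ∈ Set.extremePoints ℝ Q, 0 < wedge v p ∧ wedge v (N p) ≤ 0 := by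
    by_cases h3 : wedge v (N (N v)) ≤ 0
    · exact ⟨N v, hNm v hv, (hN v hv).pos, h3⟩
    · have hv2 := hNm v hv
      have hv3 := hNm _ hv2
      exact ⟨N (N v), hv3, by linarith,
        (height_bound hℓ hQ hc (hN v hv) (hN _ hv2) (hN _ hv3)).resolve_left h3⟩
  have hsub : Set.extremePoints ℝ Q ⊆
      (({v, N v, N (N v), N p, N (N p), N (N (N p))} : Finset V) : Set V) := by
    intro w hw
    simp only [Finset.coe_insert, Finset.coe_singleton, mem_insert_iff, mem_singleton_iff]
    rcases lt_or_ge 0 (wedge v w) with h | h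
    · rcases hleft v hv w hw h with h | h <;> simp [h]
    · rcases mem_right hL hc h0 hv (hN p hp) hvp hvu hw h with h | h | h
      · simp [h]
      · simp [h]
      · rcases hleft _ (hNm p hp) w hw h with h | h <;> simp [h]
  calc (Set.extremePoints ℝ Q).ncard
      ≤ (({v, N v, N (N v), N p, N (N p), N (N (N p))} : Finset V) : Set V).ncard :=
        Set.ncard_le_ncard hsub (Finset.finite_toSet _)
    _ ≤ 6 := by
        rw [Set.ncard_coe_finset]
        exact Finset.card_le_six
end
end

section
/- Oddness of the index: Let ℓ be a positive integer and suppose there exists an ℓ-reflexive polygon Q ⊆ ℝ² with respect to ℤ². Then ℓ is odd. -/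
/-!
Suppose `ℓ` is even. Reducing modulo 2, an edge normal `n` and the endpoints `v`, `w` of the edge
satisfy `⟨n, v⟩ = ⟨n, w⟩ = 0` with `n`, `v`, `w` all nonzero in `𝔽₂²`; hence any two vertices on a
common edge agree modulo 2, and so do the normals of any two edges with a common vertex.
Write `u` for the primitive edge direction obtained by rotating `n` by a quarter turn. Then
neighbouring vertices satisfy `w - v = h u` with `h` even, and the directions of the two edges at `v`
satisfy `u - u' = k v` with `k` even. Both `h` and `k` are nonzero, so they have absolute value at
least 2.

Take a linear functional `φ` which is injective on `ℤ²` and a vertex `v` at which `|φ|` is maximal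
(after a change of sign, `φ v > 0`). From `|h| ≥ 2` it follows that `|φ u| ≤ φ v`, and likewise
`|φ u'| ≤ φ v`; from `|k| ≥ 2` it follows that both are equalities. So `u = ± v` by injectivity of
`φ`, which contradicts `det (v, u) = -ℓ ≠ 0`. This is `no_even_corner`.

The geometric part (`exists_edge`) produces the two edges at `v`: since `φ` is maximal at `v` alone,
the vertices maximising and minimising the slope `det (v, ·) / (φ v - φ ·)` are joined to `v` by
edges, and they lie on different sides of the line `ℝ v` because `0` is an interior point.
-/

open Set

noncomputable section

/-! ### Arithmetic of primitive vectors -/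

/-- In coordinates, a primitive vector is an integer vector with coprime entries. -/
lemma IsPrimitive.exists_coprime {v : V} (hv : IsPrimitive v) :
    ∃ a b : ℤ, IsCoprime a b ∧ v = ((a : ℝ), (b : ℝ)) := by
  obtain ⟨⟨⟨a, b⟩, rfl⟩, h0, hs⟩ := hv
  refine ⟨a, b, ?_, rfl⟩
  rw [Int.isCoprime_iff_gcd_eq_one]
  have hg : 0 < Int.gcd a b := by
    rcases Nat.eq_zero_or_pos (Int.gcd a b) with h | h
    · rw [Int.gcd_eq_zero_iff] at h
      exact absurd (by simp [h.1, h.2]) h0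
    · exact h
  obtain ⟨c, hc⟩ := Int.gcd_dvd_left a b
  obtain ⟨d, hd⟩ := Int.gcd_dvd_right a b
  generalize Int.gcd a b = g at *
  have hgR : (1 : ℝ) ≤ g := by exact_mod_cast hg
  have hcR : (a : ℝ) = g * c := by exact_mod_cast hc
  have hdR : (b : ℝ) = g * d := by exact_mod_cast hd
  have hmem : (((c : ℝ), (d : ℝ)) : V) ∈
      segment ℝ (0 : V) ((a : ℝ), (b : ℝ)) ∩ latticePts := by
    refine ⟨⟨1 - 1 / g, 1 / g, ?_, by positivity, by ring, ?_⟩, ⟨(c, d), rfl⟩⟩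
    · have : (1 : ℝ) / g ≤ 1 := by rw [div_le_one (by linarith)]; exact hgR
      linarith
    · have : (g : ℝ) ≠ 0 := by linarith
      ext <;> simp [hcR, hdR] <;> field_simp
  rw [hs] at hmem
  rcases hmem with h | h
  · have h1 : (c : ℝ) = 0 := congrArg Prod.fst h
    have h2 : (d : ℝ) = 0 := congrArg Prod.snd h
    exact absurd (by simp [hcR, hdR, h1, h2]) h0
  · have h1 : (c : ℝ) = a := congrArg Prod.fst h
    have h2 : (d : ℝ) = b := congrArg Prod.snd h
    have h3 : ((g : ℝ) - 1) * c = 0 := by linarith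
    have h4 : ((g : ℝ) - 1) * d = 0 := by linarith
    by_contra hne
    have h5 : (g : ℝ) - 1 ≠ 0 := fun h => hne (by
      have : (g : ℝ) = 1 := by linarith
      exact_mod_cast this)
    have h6 := (mul_eq_zero.1 h3).resolve_left h5
    have h7 := (mul_eq_zero.1 h4).resolve_left h5
    exact h0 (by simp [hcR, hdR, h6, h7])

/-- An integer vector orthogonal to a primitive vector `(n₁, n₂)` is an integer multiple of its
quarter turn `(-n₂, n₁)`. -/
lemma exists_mul_rot {n₁ n₂ x y : ℤ} (hn : IsCoprime n₁ n₂) (h : n₁ * x + n₂ * y = 0) :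
    ∃ k : ℤ, x = -k * n₂ ∧ y = k * n₁ := by
  obtain ⟨a, b, hab⟩ := hn
  exact ⟨a * y - b * x, by linear_combination -x * hab + a * h,
    by linear_combination -y * hab + b * h⟩

lemma odd_or_odd {a b : ℤ} (h : IsCoprime a b) : a % 2 = 1 ∨ b % 2 = 1 := by
  by_contra! hc
  obtain ⟨x, y, hxy⟩ := h
  obtain ⟨c, rfl⟩ : (2 : ℤ) ∣ a := by omega
  obtain ⟨d, rfl⟩ : (2 : ℤ) ∣ b := by omega
  have : 2 * (x * c + y * d) = 1 := by linarith
  omega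

/-- The difference of two primitive vectors that are orthogonal modulo 2 to the same primitive
vector `(n₁, n₂)` is an even multiple of any primitive vector of which it is a multiple: all the
nonzero vectors of `𝔽₂²` orthogonal to a given nonzero vector coincide. -/
lemma even_multiple {n₁ n₂ x y x' y' p q k : ℤ} (hn : IsCoprime n₁ n₂) (hx : IsCoprime x y)
    (hx' : IsCoprime x' y') (hp : IsCoprime p q)
    (h : (n₁ * x + n₂ * y) % 2 = 0) (h' : (n₁ * x' + n₂ * y') % 2 = 0)
    (h1 : x' - x = k * p) (h2 : y' - y = k * q) : k % 2 = 0 := by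
  have hn := odd_or_odd hn
  have hx := odd_or_odd hx
  have hx' := odd_or_odd hx'
  have hp := odd_or_odd hp
  have e1 : (x' - x) % 2 = 0 ∧ (y' - y) % 2 = 0 := by
    rcases Int.emod_two_eq_zero_or_one n₁ with a | a <;>
    rcases Int.emod_two_eq_zero_or_one n₂ with b | b <;>
    simp [Int.add_emod, Int.mul_emod, a, b] at h h' hn <;> omega
  rw [h1, h2] at e1
  rcases Int.emod_two_eq_zero_or_one k with a | a
  · exact a
  · rcases hp with b | b <;> simp [Int.mul_emod, a, b] at e1

/-! ### Corners of even index -/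

/-- The arithmetic heart of the argument: for even `ℓ` there is no vertex `v` with two edges
(primitive inner normals `n`, `n'`, further vertices `w`, `w'` on the two sides of `ℝ v`), at which
a functional `(x, y) ↦ α x + β y` that is injective on `ℤ²` is maximal in absolute value. -/
lemma no_even_corner {l v₁ v₂ w₁ w₂ w₁' w₂' n₁ n₂ n₁' n₂' : ℤ} {α β : ℝ} (hl : 0 < l)
    (hl2 : l % 2 = 0)
    (hv : IsCoprime v₁ v₂) (hw : IsCoprime w₁ w₂) (hw' : IsCoprime w₁' w₂')
    (hn : IsCoprime n₁ n₂) (hn' : IsCoprime n₁' n₂')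
    (nv : n₁ * v₁ + n₂ * v₂ = -l) (nw : n₁ * w₁ + n₂ * w₂ = -l)
    (nv' : n₁' * v₁ + n₂' * v₂ = -l) (nw' : n₁' * w₁' + n₂' * w₂' = -l)
    (hd : 0 < v₁ * w₂ - v₂ * w₁) (hd' : v₁ * w₂' - v₂ * w₁' < 0)
    (inj : ∀ x y : ℤ, α * x + β * y = 0 → x = 0 ∧ y = 0)
    (pw : α * w₁ + β * w₂ < α * v₁ + β * v₂) (pw' : α * w₁' + β * w₂' < α * v₁ + β * v₂)
    (qw : -(α * v₁ + β * v₂) ≤ α * w₁ + β * w₂)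
    (qw' : -(α * v₁ + β * v₂) ≤ α * w₁' + β * w₂') : False := by
  -- The edge directions are `u = (-n₂, n₁)` and `u' = (-n₂', n₁')`, with `det (v, u) = -ℓ`.
  obtain ⟨h, h1, h2⟩ := exists_mul_rot (x := w₁ - v₁) (y := w₂ - v₂) hn (by linarith)
  obtain ⟨h', h1', h2'⟩ := exists_mul_rot (x := w₁' - v₁) (y := w₂' - v₂) hn' (by linarith)
  obtain ⟨k, k1, k2⟩ := exists_mul_rot (x := n₁ - n₁') (y := n₂ - n₂') hv (by linarith)
  have he : h % 2 = 0 := even_multiple hn hv hw (p := -n₂) (q := n₁) hn.symm.neg_left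
    (by omega) (by omega) (by linarith) h2
  have he' : h' % 2 = 0 := even_multiple hn' hv hw' (p := -n₂') (q := n₁') hn'.symm.neg_left
    (by omega) (by omega) (by linarith) h2'
  have ke : k % 2 = 0 := even_multiple (x := n₁') (y := n₂') (x' := n₁) (y' := n₂)
    (p := -v₂) (q := v₁) hv hn' hn hv.symm.neg_left
    (by rw [mul_comm v₁, mul_comm v₂]; omega) (by rw [mul_comm v₁, mul_comm v₂]; omega)
    (by linarith) k2
  have hh : v₁ * w₂ - v₂ * w₁ = -(l * h) := by
    linear_combination v₁ * h2 - v₂ * h1 + h * nv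
  have hh' : v₁ * w₂' - v₂ * w₁' = -(l * h') := by
    linear_combination v₁ * h2' - v₂ * h1' + h' * nv'
  have hneg : h ≤ -2 := by
    have : h < 0 := by
      by_contra! hc
      nlinarith
    omega
  have hpos : 2 ≤ h' := by
    have : 0 < h' := by
      by_contra! hc
      nlinarith
    omega
  have hnegR : (h : ℝ) ≤ -2 := by exact_mod_cast hneg
  have hposR : (2 : ℝ) ≤ h' := by exact_mod_cast hpos
  have r1 : (w₁ : ℝ) - v₁ = -h * n₂ := by exact_mod_cast h1
  have r2 : (w₂ : ℝ) - v₂ = h * n₁ := by exact_mod_cast h2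
  have r1' : (w₁' : ℝ) - v₁ = -h' * n₂' := by exact_mod_cast h1'
  have r2' : (w₂' : ℝ) - v₂ = h' * n₁' := by exact_mod_cast h2'
  have s1 : (n₁ : ℝ) - n₁' = -k * v₂ := by exact_mod_cast k1
  have s2 : (n₂ : ℝ) - n₂' = k * v₁ := by exact_mod_cast k2
  obtain ⟨P, hP⟩ : ∃ P : ℝ, P = α * v₁ + β * v₂ := ⟨_, rfl⟩
  obtain ⟨U, hU⟩ : ∃ U : ℝ, U = -α * n₂ + β * n₁ := ⟨_, rfl⟩
  obtain ⟨U', hU'⟩ : ∃ U' : ℝ, U' = -α * n₂' + β * n₁' := ⟨_, rfl⟩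
  have eW : α * w₁ + β * w₂ = P + h * U := by
    rw [hP, hU]; linear_combination α * r1 + β * r2
  have eW' : α * w₁' + β * w₂' = P + h' * U' := by
    rw [hP, hU']; linear_combination α * r1' + β * r2'
  have eU : U - U' = -k * P := by
    rw [hP, hU, hU']; linear_combination -α * s2 + β * s1
  rw [← hP, eW] at pw qw
  rw [← hP, eW'] at pw' qw'
  have hUpos : 0 < U := by
    by_contra! hc
    nlinarith
  have hUneg : U' < 0 := by
    by_contra! hc
    nlinarith
  have hUle : U ≤ P := by nlinarith
  have hUle' : -P ≤ U' := by nlinarith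
  have hPpos : 0 < P := by linarith
  have hk : k ≤ -2 := by
    have : k < 0 := by
      by_contra! hc
      have : (0 : ℝ) ≤ k := by exact_mod_cast hc
      nlinarith
    omega
  have hkR : (k : ℝ) ≤ -2 := by exact_mod_cast hk
  have hUP : U = P := by
    have := mul_le_mul_of_nonneg_right hkR hPpos.le
    linarith
  have := inj (v₁ + n₂) (v₂ - n₁) (by push_cast; linarith)
  obtain ⟨i1, i2⟩ := this
  have : n₂ = -v₁ := by linarith
  have : n₁ = v₂ := by linarith
  subst n₁ n₂
  linarith

/-! ### Edges of convex hulls of finite sets -/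

lemma le_dotV_of_mem_convexHull {E : Set V} {η : V} {c : ℝ} (h : ∀ e ∈ E, c ≤ dotV η e) :
    ∀ z ∈ convexHull ℝ E, c ≤ dotV η z := by
  intro z hz
  have hconv : Convex ℝ {z : V | c ≤ dotV η z} := by
    intro x hx y hy a b ha hb hab
    have hx : c ≤ dotV η x := hx
    have hy : c ≤ dotV η y := hy
    change c ≤ dotV η (a • x + b • y)
    have : dotV η (a • x + b • y) = a * dotV η x + b * dotV η y := by
      simp [dotV]; ring
    rw [this]
    have h1 := mul_le_mul_of_nonneg_left hx ha
    have h2 := mul_le_mul_of_nonneg_left hy hb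
    have h3 : a * c + b * c = c := by rw [← add_mul, hab, one_mul]
    linarith
  exact convexHull_min (fun e he => h e he) hconv hz

lemma exists_dotV_pos {E : Set V} (h0 : (0 : V) ∈ interior (convexHull ℝ E)) {ψ : V}
    (hψ : ψ ≠ 0) : ∃ e ∈ E, 0 < dotV ψ e := by
  by_contra! hc
  have hle : ∀ z ∈ convexHull ℝ E, 0 ≤ dotV (-ψ) z :=
    le_dotV_of_mem_convexHull fun e he => by
      have := hc e he
      simp only [dotV, Prod.fst_neg, Prod.snd_neg] at *
      linarith
  have hcont : Filter.Tendsto (fun t : ℝ => t • ψ) (nhdsWithin 0 (Ioi 0)) (nhds (0 : V)) := by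
    have : Continuous (fun t : ℝ => t • ψ) := by fun_prop
    have := this.tendsto 0
    rw [zero_smul] at this
    exact this.mono_left nhdsWithin_le_nhds
  have hev := hcont.eventually (mem_interior_iff_mem_nhds.1 h0)
  obtain ⟨t, ht, htpos⟩ := (hev.and self_mem_nhdsWithin).exists
  have h1 := hle _ ht
  have htpos : 0 < t := htpos
  have h2 : 0 < ψ.1 ^ 2 + ψ.2 ^ 2 := by
    by_contra! hcc
    apply hψ
    ext
    · simp only [Prod.fst_zero]; nlinarith [sq_nonneg ψ.1, sq_nonneg ψ.2]
    · simp only [Prod.snd_zero]; nlinarith [sq_nonneg ψ.1, sq_nonneg ψ.2]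
  have h3 : dotV (-ψ) (t • ψ) = -(t * (ψ.1 ^ 2 + ψ.2 ^ 2)) := by
    simp [dotV]; ring
  rw [h3] at h1
  have := mul_pos htpos h2
  linarith

/-- Let `v` be the unique maximiser of `φ` among the finitely many points of `E`, and let `ψ`
vanish at `v` and be positive somewhere on `E`. Then `v` lies on an edge of `conv E` together with
a point `w ∈ E` on the side `ψ > 0`, namely the one of maximal slope `ψ w / (φ v - φ w)`. -/
lemma exists_edge {E : Set V} (hE : E.Finite) {v φ ψ : V} (hv : v ∈ E)
    (hφv : 0 < dotV φ v) (hmax : ∀ a ∈ E, a ≠ v → dotV φ a < dotV φ v)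
    (hψv : dotV ψ v = 0) (hψ : ∃ e ∈ E, 0 < dotV ψ e) :
    ∃ w ∈ E, w ≠ v ∧ 0 < dotV ψ w ∧ ∃ F, IsEdge (convexHull ℝ E) F ∧ v ∈ F ∧ w ∈ F := by
  obtain ⟨e, he, hepos⟩ := hψ
  have hev : e ≠ v := by rintro rfl; linarith
  obtain ⟨w, ⟨hw, hwv⟩, hwmax⟩ := Set.exists_max_image (E \ {v})
    (fun a => dotV ψ a / (dotV φ v - dotV φ a)) (hE.subset sdiff_subset) ⟨e, he, hev⟩
  have hwv : w ≠ v := hwv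
  have hwpos := sub_pos.2 (hmax w hw hwv)
  obtain ⟨s, hs⟩ : ∃ s, s = dotV ψ w / (dotV φ v - dotV φ w) := ⟨_, rfl⟩
  rw [← hs] at hwmax
  have hspos : 0 < s :=
    lt_of_lt_of_le (div_pos hepos (sub_pos.2 (hmax e he hev))) (hwmax e ⟨he, hev⟩)
  have hsw : dotV ψ w = s * (dotV φ v - dotV φ w) := by rw [hs]; field_simp
  have hlin : ∀ z, dotV (-(ψ + s • φ)) z = -(dotV ψ z + s * dotV φ z) := by
    intro z; simp [dotV]; ring
  have hmin : ∀ z ∈ convexHull ℝ E, -(s * dotV φ v) ≤ dotV (-(ψ + s • φ)) z := by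
    apply le_dotV_of_mem_convexHull
    intro a ha
    rw [hlin]
    by_cases hav : a = v
    · rw [hav, hψv]; linarith
    · have h1 := hwmax a ⟨ha, hav⟩
      rw [div_le_iff₀ (sub_pos.2 (hmax a ha hav))] at h1
      linarith
  have hvF : dotV (-(ψ + s • φ)) v = -(s * dotV φ v) := by rw [hlin, hψv]; ring
  have hwF : dotV (-(ψ + s • φ)) w = -(s * dotV φ v) := by rw [hlin, hsw]; ring
  have hvm : v ∈ {y ∈ convexHull ℝ E | ∀ z ∈ convexHull ℝ E,
      dotV (-(ψ + s • φ)) y ≤ dotV (-(ψ + s • φ)) z} :=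
    ⟨subset_convexHull ℝ E hv, fun z hz => hvF.trans_le (hmin z hz)⟩
  have hwm : w ∈ {y ∈ convexHull ℝ E | ∀ z ∈ convexHull ℝ E,
      dotV (-(ψ + s • φ)) y ≤ dotV (-(ψ + s • φ)) z} :=
    ⟨subset_convexHull ℝ E hw, fun z hz => hwF.trans_le (hmin z hz)⟩
  refine ⟨w, hw, hwv, by rw [hsw]; exact mul_pos hspos hwpos, _,
    ⟨⟨_, ?_, rfl⟩, v, hvm, w, hwm, hwv.symm⟩, hvm, hwm⟩
  intro h0
  rw [h0] at hvF
  have := mul_pos hspos hφv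
  simp [dotV] at hvF this
  rcases hvF with h | h
  · linarith
  · rw [h] at this; simp at this

lemma IsPolygon.eq_convexHull_extremePoints {Q : Set V} (hQ : IsPolygon Q) :
    (extremePoints ℝ Q).Finite ∧ Q = convexHull ℝ (extremePoints ℝ Q) := by
  obtain ⟨A, rfl, -⟩ := hQ
  have hfin : (extremePoints ℝ (convexHull ℝ (A : Set V))).Finite :=
    A.finite_toSet.subset extremePoints_convexHull_subset
  refine ⟨hfin, ?_⟩
  have hc : IsCompact (convexHull ℝ (A : Set V)) := A.finite_toSet.isCompact_convexHull ℝ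
  have h1 := closure_convexHull_extremePoints hc (convex_convexHull ℝ _)
  rw [(hfin.isClosed_convexHull ℝ).closure_eq] at h1
  exact h1.symm

/-! ### An injective functional and the conclusion -/

/-- The functional `(x, y) ↦ x + √2 y` is injective on `ℤ²`. -/
lemma sqrt_two_inj (x y : ℤ) (h : (x : ℝ) + √2 * y = 0) : x = 0 ∧ y = 0 := by
  have hy : y = 0 := by
    by_contra hy
    have hirr := (irrational_sqrt_two.mul_intCast hy).intCast_add x
    exact hirr.ne_zero h
  subst hy
  simpa using h

/-- **Oddness of the index:** if there exists an ℓ-reflexive polygon, then ℓ is odd. -/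
theorem index_is_odd (ℓ : ℕ) (hℓ : 0 < ℓ) (h : ∃ Q : Set V, IsLReflexive ℓ Q) :
    Odd ℓ := by
  obtain ⟨Q, hQ⟩ := h
  by_contra hodd
  have heven : (ℓ : ℤ) % 2 = 0 := by
    rw [Nat.not_odd_iff_even, Nat.even_iff] at hodd
    omega
  obtain ⟨hfin, hconv⟩ := hQ.polygon.eq_convexHull_extremePoints
  have hprim := hQ.vertices_primitive
  have hint := hQ.zero_mem_interior
  have hedge := hQ.edge_cond
  generalize extremePoints ℝ Q = E at *
  subst hconv
  have hne : E.Nonempty := by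
    obtain ⟨e, he, -⟩ := exists_dotV_pos hint (ψ := (1, 0)) (by simp)
    exact ⟨e, he⟩
  obtain ⟨v, hv, hvmax⟩ := Set.exists_max_image E (fun a => |dotV (1, √2) a|) hfin hne
  -- Adjust the sign of the functional so that it is nonnegative at `v`.
  obtain ⟨ε, hε, hεv⟩ : ∃ ε : ℝ, (ε = 1 ∨ ε = -1) ∧
      |dotV (1, √2) v| = ε * dotV (1, √2) v := by
    rcases le_total 0 (dotV (1, √2) v) with h | h
    · exact ⟨1, Or.inl rfl, by rw [abs_of_nonneg h]; ring⟩
    · exact ⟨-1, Or.inr rfl, by rw [abs_of_nonpos h]; ring⟩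
  have hφ : ∀ a, dotV (ε, ε * √2) a = ε * dotV (1, √2) a := by intro a; simp [dotV]; ring
  have hbound : ∀ a ∈ E, |dotV (ε, ε * √2) a| ≤ dotV (ε, ε * √2) v := by
    intro a ha
    have := hvmax a ha
    rw [hφ, hφ, ← hεv, abs_mul]
    rcases hε with rfl | rfl <;> simpa using this
  have inj : ∀ x y : ℤ, ε * x + ε * √2 * y = 0 → x = 0 ∧ y = 0 := by
    intro x y hxy
    apply sqrt_two_inj
    rcases hε with rfl | rfl <;> linarith
  obtain ⟨v₁, v₂, hvc, rfl⟩ := (hprim v hv).exists_coprime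
  have hv0 := (hprim _ hv).2.1
  have hφv : 0 < dotV (ε, ε * √2) ((v₁ : ℝ), (v₂ : ℝ)) := by
    refine lt_of_le_of_ne ((abs_nonneg _).trans (hbound _ hv)) fun h => hv0 ?_
    obtain ⟨h1, h2⟩ := inj v₁ v₂ h.symm
    simp [h1, h2]
  have hmax : ∀ a ∈ E, a ≠ ((v₁ : ℝ), (v₂ : ℝ)) →
      dotV (ε, ε * √2) a < dotV (ε, ε * √2) ((v₁ : ℝ), (v₂ : ℝ)) := by
    intro a ha hav
    refine lt_of_le_of_ne ((le_abs_self _).trans (hbound a ha)) fun h => hav ?_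
    obtain ⟨a₁, a₂, -, rfl⟩ := (hprim a ha).exists_coprime
    simp only [dotV] at h
    obtain ⟨h1, h2⟩ := inj (a₁ - v₁) (a₂ - v₂) (by push_cast; linarith)
    rw [sub_eq_zero.1 h1, sub_eq_zero.1 h2]
  -- `ψ = (-v₂, v₁)` represents `det (v, ·)`; its two signs give the two edges at `v`.
  have hψ0 : ((-(v₂ : ℝ), (v₁ : ℝ)) : V) ≠ 0 := by
    intro h
    apply hv0
    simp only [Prod.mk_eq_zero, neg_eq_zero] at h
    simp [h.1, h.2]
  have hψ0' : (((v₂ : ℝ), -(v₁ : ℝ)) : V) ≠ 0 := by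
    intro h
    apply hv0
    simp only [Prod.mk_eq_zero, neg_eq_zero] at h
    simp [h.1, h.2]
  obtain ⟨w, hw, hwv, hwpos, F, hF, hvF, hwF⟩ := exists_edge hfin hv hφv hmax
    (ψ := (-(v₂ : ℝ), (v₁ : ℝ))) (by simp [dotV]; ring) (exists_dotV_pos hint hψ0)
  obtain ⟨w', hw', hwv', hwpos', F', hF', hvF', hwF'⟩ := exists_edge hfin hv hφv hmax
    (ψ := ((v₂ : ℝ), -(v₁ : ℝ))) (by simp [dotV]; ring) (exists_dotV_pos hint hψ0')
  obtain ⟨n, hn, hnF⟩ := hedge F hF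
  obtain ⟨n', hn', hnF'⟩ := hedge F' hF'
  have pw := hmax w hw hwv
  have pw' := hmax w' hw' hwv'
  have qw := (abs_le.1 (hbound w hw)).1
  have qw' := (abs_le.1 (hbound w' hw')).1
  obtain ⟨w₁, w₂, hwc, rfl⟩ := (hprim w hw).exists_coprime
  obtain ⟨w₁', w₂', hwc', rfl⟩ := (hprim w' hw').exists_coprime
  obtain ⟨n₁, n₂, hnc, rfl⟩ := hn.exists_coprime
  obtain ⟨n₁', n₂', hnc', rfl⟩ := hn'.exists_coprime
  have nv := hnF hvF
  have nw := hnF hwF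
  have nv' := hnF' hvF'
  have nw' := hnF' hwF'
  simp only [dotV, mem_ofPred_eq] at nv nw nv' nw' hwpos hwpos' pw pw' qw qw'
  have hd : (0 : ℝ) < v₁ * w₂ - v₂ * w₁ := by linarith
  have hd' : (v₁ * w₂' - v₂ * w₁' : ℝ) < 0 := by linarith
  exact no_even_corner (l := (ℓ : ℤ)) (by exact_mod_cast hℓ) heven hvc hwc hwc' hnc hnc'
    (by exact_mod_cast nv) (by exact_mod_cast nw) (by exact_mod_cast nv')
    (by exact_mod_cast nw') (by exact_mod_cast hd) (by exact_mod_cast hd') inj pw pw' qw qw'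
end
end

section
/- Normal form of a two-dimensional lattice cone: Let n₁, n₂ ∈ ℤ² be primitive and ℝ-linearly independent, and set q := |det(n₁,n₂)|. Then there exist an integer p and a point n₁' ∈ ℤ² such that 0 ≤ p < q, gcd(p,q) = 1, (n₁, n₁') is a ℤ-basis of ℤ², and n₂ = p·n₁ + q·n₁'; moreover the integer p with these properties is unique. -/
/-!
A primitive `n₁ = (a, b)` has coprime coordinates, so `a x + b y = 1` for some integers `x, y`, and
`w = (-y, x)` satisfies `det(n₁, w) = 1`. In the basis `(n₁, w)` one has `n₂ = c n₁ + d w` with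
`d = det(n₁, n₂) ≠ 0`. Dividing `c = p + |d| k` with remainder gives
`n₂ = p n₁ + |d| n₁'`, where `n₁' = k n₁ + sign(d) w` has `det(n₁, n₁') = sign(d) = ±1`.
A Bézout relation for the coordinates of `n₂` becomes one for `p` and `|d|`.

For uniqueness, pairing two such representations with `(x, y)` shows that the two values of `p` are
congruent modulo `|d|`, and both lie in `[0, |d|)`.
-/

open Set

noncomputable section

/-- The real embedding of an integer point. -/
def realVec (p : ℤ × ℤ) : V := ((p.1 : ℝ), (p.2 : ℝ))

/-- `det(a,b) = a₁b₂ − a₂b₁` for integer points. -/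
def detZ (a b : ℤ × ℤ) : ℤ := a.1 * b.2 - a.2 * b.1

/-- `(u,w)` is a ℤ-basis of ℤ²: every integer point is a unique integer linear
combination of `u` and `w`. -/
def IsZBasis (u w : ℤ × ℤ) : Prop :=
  ∀ v : ℤ × ℤ, ∃! ab : ℤ × ℤ, v = ab.1 • u + ab.2 • w

/-- If the gcd `g` of the coordinates were not `1`, then `v / g` would be a lattice point of the
segment from `0` to `v` other than its endpoints. -/
lemma IsPrimitive.isCoprime {v : ℤ × ℤ} (h : IsPrimitive (realVec v)) : IsCoprime v.1 v.2 := by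
  obtain ⟨-, hne, hseg⟩ := h
  obtain ⟨a, b⟩ := v
  rw [Int.isCoprime_iff_gcd_eq_one]
  simp only
  obtain ⟨a', ha⟩ := Int.gcd_dvd_left a b
  obtain ⟨b', hb⟩ := Int.gcd_dvd_right a b
  generalize Int.gcd a b = g at *
  have hg0 : (g : ℝ) ≠ 0 := by
    intro h0
    have : g = 0 := by exact_mod_cast h0
    subst this
    apply hne
    simp [realVec, ha, hb]
  have hg1 : (1 : ℝ) ≤ g := by
    have : g ≠ 0 := by exact_mod_cast hg0
    exact_mod_cast Nat.one_le_iff_ne_zero.mpr this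
  have hmem : realVec (a', b') ∈ segment ℝ (0 : V) (realVec (a, b)) ∩ latticePts := by
    refine ⟨⟨1 - (g : ℝ)⁻¹, (g : ℝ)⁻¹, ?_, by positivity, by ring, ?_⟩, ⟨(a', b'), rfl⟩⟩
    · have := inv_le_one_of_one_le₀ hg1
      linarith
    · simp only [realVec, ha, hb]
      ext <;> simp [hg0]
  rw [hseg] at hmem
  rcases hmem with h0 | h1
  · exfalso
    simp only [realVec, Prod.ext_iff, Prod.fst_zero, Prod.snd_zero, Int.cast_eq_zero] at h0
    apply hne
    simp [realVec, ha, hb, h0.1, h0.2]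
  · simp only [realVec, mem_singleton_iff, Prod.ext_iff, Int.cast_inj] at h1
    by_contra hg
    have hg' : (1 : ℤ) - g ≠ 0 := by omega
    have ea : a = 0 := by
      have : (1 - (g : ℤ)) * a = 0 := by rw [h1.1] at ha; linarith
      exact (mul_eq_zero.mp this).resolve_left hg'
    have eb : b = 0 := by
      have : (1 - (g : ℤ)) * b = 0 := by rw [h1.2] at hb; linarith
      exact (mul_eq_zero.mp this).resolve_left hg'
    exact hne (by simp [realVec, ea, eb])

lemma detZ_ne_zero_of_linearIndependent {u w : ℤ × ℤ}
    (h : LinearIndependent ℝ ![realVec u, realVec w]) : detZ u w ≠ 0 := by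
  intro hd
  rw [LinearIndependent.pair_iff] at h
  have hd' : (u.1 : ℝ) * w.2 - u.2 * w.1 = 0 := by exact_mod_cast hd
  have k2 := h w.2 (-u.2) (by ext <;> simp [realVec] <;> linarith)
  have k1 := h w.1 (-u.1) (by ext <;> simp [realVec] <;> linarith)
  -- Both coordinates of `u` vanish, so `1 • u + 0 • w = 0` is a nontrivial relation.
  have k := h 1 0 (by
    ext
    · simpa [realVec] using k1.2
    · simpa [realVec] using k2.2)
  exact one_ne_zero k.1

/-- The coordinates in the pair `(u, w)` are given by Cramer's rule; as the determinant `s` is its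
own inverse, dividing by it amounts to multiplying by it. -/
lemma isZBasis_of_detZ {u w : ℤ × ℤ} {s : ℤ} (h : detZ u w = s) (hs : s * s = 1) :
    IsZBasis u w := by
  obtain ⟨a, b⟩ := u
  obtain ⟨c, d⟩ := w
  simp only [detZ] at h
  rintro ⟨x, y⟩
  refine ⟨(s * (x * d - y * c), s * (a * y - b * x)), ?_, ?_⟩
  · ext <;> simp only [Prod.fst_add, Prod.snd_add, Prod.smul_fst, Prod.smul_snd, smul_eq_mul]
    · linear_combination -x * hs - x * s * h
    · linear_combination -y * hs - y * s * h
  · rintro ⟨m, n⟩ hmn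
    simp only [Prod.ext_iff, Prod.fst_add, Prod.snd_add, Prod.smul_fst, Prod.smul_snd,
      smul_eq_mul] at hmn
    obtain ⟨rfl, rfl⟩ := hmn
    ext <;> simp only
    · linear_combination -m * hs - m * s * h
    · linear_combination -n * hs - n * s * h

/-- **Normal form of a two-dimensional lattice cone.** -/
theorem cone_normal_form (n₁ n₂ : ℤ × ℤ)
    (h₁ : IsPrimitive (realVec n₁)) (h₂ : IsPrimitive (realVec n₂))
    (hind : LinearIndependent ℝ ![realVec n₁, realVec n₂]) :
    ∃! p : ℤ, 0 ≤ p ∧ p < |detZ n₁ n₂| ∧ Int.gcd p |detZ n₁ n₂| = 1 ∧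
      ∃ n₁' : ℤ × ℤ, IsZBasis n₁ n₁' ∧ n₂ = p • n₁ + |detZ n₁ n₂| • n₁' := by
  obtain ⟨x, y, hxy⟩ := h₁.isCoprime
  obtain ⟨e, f, hef⟩ := h₂.isCoprime
  have hd := detZ_ne_zero_of_linearIndependent hind
  obtain ⟨s, hss, hs⟩ : ∃ s : ℤ, s * s = 1 ∧ |detZ n₁ n₂| * s = detZ n₁ n₂ := by
    rcases abs_choice (detZ n₁ n₂) with h | h
    · exact ⟨1, by norm_num, by rw [h]; ring⟩
    · exact ⟨-1, by norm_num, by rw [h]; ring⟩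
  have hq : 0 < |detZ n₁ n₂| := abs_pos.mpr hd
  have hdet : detZ n₁ n₂ = n₁.1 * n₂.2 - n₁.2 * n₂.1 := rfl
  generalize |detZ n₁ n₂| = q at *
  rw [hdet] at hs
  obtain ⟨a, b⟩ := n₁
  obtain ⟨c, d⟩ := n₂
  simp only at hxy hef hs
  have hdiv := Int.emod_add_mul_ediv (c * x + d * y) q
  have hp0 := Int.emod_nonneg (c * x + d * y) hq.ne'
  have hpq := Int.emod_lt_of_pos (c * x + d * y) hq
  generalize (c * x + d * y) % q = p at *
  generalize (c * x + d * y) / q = k at *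
  have hc : c = p * a + q * (k * a - s * y) := by
    linear_combination -c * hxy - a * hdiv + y * hs
  have hdd : d = p * b + q * (k * b + s * x) := by
    linear_combination -d * hxy - b * hdiv - x * hs
  refine ⟨p, ⟨hp0, hpq, ?_, (k * a - s * y, k * b + s * x), ?_, ?_⟩, ?_⟩
  · rw [← Int.isCoprime_iff_gcd_eq_one]
    refine ⟨e * a + f * b, e * (k * a - s * y) + f * (k * b + s * x), ?_⟩
    linear_combination hef - e * hc - f * hdd
  · refine isZBasis_of_detZ (s := s) ?_ hss
    simp only [detZ]
    linear_combination s * hxy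
  · exact Prod.ext (by simpa using hc) (by simpa using hdd)
  · rintro p' ⟨hp0', hpq', -, ⟨m, n⟩, -, hm⟩
    simp only [Prod.ext_iff, Prod.fst_add, Prod.snd_add, Prod.smul_fst, Prod.smul_snd,
      smul_eq_mul] at hm
    have hdvd : q ∣ p' - p :=
      ⟨k - m * x - n * y, by
        linear_combination (p' * (-1)) * hxy - x * hm.1 - y * hm.2 - hdiv⟩
    have := Int.eq_zero_of_abs_lt_dvd hdvd (by rw [abs_lt]; constructor <;> linarith)
    linarith
end
end

section
/- Unimodular equivalence of two-dimensional lattice cones: Let n₁, n₂ ∈ ℤ² be primitive and ℝ-linearly independent with n₂ = p·n₁ + q·n₁', where (n₁,n₁') is a ℤ-basis of ℤ², q = |det(n₁,n₂)| and 0 ≤ p < q; similarly let v₁, v₂ ∈ ℤ² be primitive and ℝ-linearly independent with v₂ = p'·v₁ + q'·v₁', where (v₁,v₁') is a ℤ-basis of ℤ², q' = |det(v₁,v₂)| and 0 ≤ p' < q'. Then there exists A ∈ GL₂(ℤ) whose linear map carries cone(n₁,n₂) onto cone(v₁,v₂) if and only if q = q' and (p = p' or p·p' ≡ 1 (mod q)).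 -/
/-!
A unimodular map carrying one pointed cone onto another must carry the primitive ray generators
to the primitive ray generators, in one of the two possible orders: the two pairs of generators
express each other with nonnegative coefficients, and a nonnegative `2 × 2` matrix with nonnegative
inverse is monomial (`cone_generators`); primitivity then forces the scaling factors to be `1`
(`eq_of_real_smul`). If the order is kept, comparing `v₂ = p'·v₁ + q·v₁'` with
`A n₂ = p·v₁ + q·A n₁'` gives `p ≡ p' (mod q)`, hence `p = p'`. If it is reversed,
`v₁ = A n₂ = p·v₂ + q·A n₁'` gives `p·p' ≡ 1 (mod q)`.

Conversely, a matrix is prescribed on the basis `(n₁, n₁')` (`exists_matrix`): by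
`n₁ ↦ v₁, n₁' ↦ v₁'` if `p = p'`, and by `n₁ ↦ v₂, n₁' ↦ k·v₁ - p·v₁'` if `1 - p·p' = q·k`,
since then `n₂ ↦ v₁`.
-/

open Set

noncomputable section

/-- The cone spanned by two vectors. -/
def coneR (a b : V) : Set V := {x : V | ∃ s t : ℝ, 0 ≤ s ∧ 0 ≤ t ∧ x = s • a + t • b}

/-- The linear map on ℝ² given by an integer 2×2 matrix. -/
def mapGL (A : Matrix (Fin 2) (Fin 2) ℤ) (x : V) : V :=
  ((A 0 0 : ℝ) * x.1 + (A 0 1 : ℝ) * x.2, (A 1 0 : ℝ) * x.1 + (A 1 1 : ℝ) * x.2)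

/-! ### Integer matrices acting on lattice points and cones -/

/-- The action of an integer matrix on integer points; `mapGL` restricted to the lattice. -/
def act (A : Matrix (Fin 2) (Fin 2) ℤ) (x : ℤ × ℤ) : ℤ × ℤ :=
  (A 0 0 * x.1 + A 0 1 * x.2, A 1 0 * x.1 + A 1 1 * x.2)

lemma mapGL_realVec (A : Matrix (Fin 2) (Fin 2) ℤ) (x : ℤ × ℤ) :
    mapGL A (realVec x) = realVec (act A x) := by
  simp [mapGL, realVec, act]

lemma mapGL_image_cone (A : Matrix (Fin 2) (Fin 2) ℤ) (a b : ℤ × ℤ) :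
    mapGL A '' coneR (realVec a) (realVec b) =
      coneR (realVec (act A a)) (realVec (act A b)) := by
  have key : ∀ s t : ℝ, mapGL A (s • realVec a + t • realVec b) =
      s • realVec (act A a) + t • realVec (act A b) := by
    intro s t
    rw [← mapGL_realVec, ← mapGL_realVec]
    ext <;> simp [mapGL] <;> ring
  ext x
  constructor
  · rintro ⟨_, ⟨s, t, hs, ht, rfl⟩, rfl⟩
    exact ⟨s, t, hs, ht, key s t⟩
  · rintro ⟨s, t, hs, ht, rfl⟩
    exact ⟨_, ⟨s, t, hs, ht, rfl⟩, key s t⟩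

lemma coneR_comm (a b : V) : coneR a b = coneR b a := by
  ext x
  constructor <;> rintro ⟨s, t, hs, ht, rfl⟩ <;> exact ⟨t, s, ht, hs, add_comm _ _⟩

lemma act_combo (A : Matrix (Fin 2) (Fin 2) ℤ) (r s : ℤ) (x y : ℤ × ℤ) :
    act A (r • x + s • y) = r • act A x + s • act A y := by
  ext <;> simp [act] <;> ring

lemma detZ_act (A : Matrix (Fin 2) (Fin 2) ℤ) (x y : ℤ × ℤ) :
    detZ (act A x) (act A y) = A.det * detZ x y := by
  simp only [detZ, act, Matrix.det_fin_two]; ring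

lemma detZ_combo (u w : ℤ × ℤ) (p q : ℤ) : detZ u (p • u + q • w) = q * detZ u w := by
  simp [detZ]; ring

/-! ### Bases and primitive points -/

lemma IsZBasis.det_unit {u w : ℤ × ℤ} (h : IsZBasis u w) : IsUnit (detZ u w) := by
  obtain ⟨⟨a, b⟩, h1, -⟩ := h (1, 0)
  obtain ⟨⟨c, d⟩, h2, -⟩ := h (0, 1)
  simp only [Prod.ext_iff, Prod.fst_add, Prod.snd_add, Prod.smul_fst, Prod.smul_snd,
    smul_eq_mul] at h1 h2
  obtain ⟨h11, h12⟩ := h1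
  obtain ⟨h21, h22⟩ := h2
  refine IsUnit.of_mul_eq_one (a * d - b * c) ?_
  calc detZ u w * (a * d - b * c)
      = (a * u.1 + b * w.1) * (c * u.2 + d * w.2)
        - (a * u.2 + b * w.2) * (c * u.1 + d * w.1) := by simp only [detZ]; ring
    _ = 1 := by rw [← h11, ← h12, ← h21, ← h22]; norm_num

lemma IsPrimitive.isCoprime_s13 {n : ℤ × ℤ} (h : IsPrimitive (realVec n)) : IsCoprime n.1 n.2 := by
  obtain ⟨-, h0, hs⟩ := h
  have hn : n ≠ 0 := by
    rintro rfl
    exact h0 (by simp [realVec])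
  have hg : 0 < Int.gcd n.1 n.2 := by
    rw [Int.gcd_pos_iff]
    by_contra! hc
    exact hn (Prod.ext hc.1 hc.2)
  obtain ⟨a, ha⟩ := Int.gcd_dvd_left n.1 n.2
  obtain ⟨b, hb⟩ := Int.gcd_dvd_right n.1 n.2
  rw [Int.isCoprime_iff_gcd_eq_one]
  set g := Int.gcd n.1 n.2
  have hgR : (1 : ℝ) ≤ g := by exact_mod_cast hg
  have haR : (n.1 : ℝ) = g * a := by exact_mod_cast ha
  have hbR : (n.2 : ℝ) = g * b := by exact_mod_cast hb
  -- `(a, b) = n / g` is a lattice point on the segment, hence one of its end points.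
  have hmem : realVec (a, b) ∈ segment ℝ (0 : V) (realVec n) ∩ latticePts := by
    refine ⟨⟨1 - (g : ℝ)⁻¹, (g : ℝ)⁻¹, ?_, by positivity, by ring, ?_⟩, (a, b), rfl⟩
    · have := inv_le_one_of_one_le₀ hgR
      linarith
    · ext
      · simp [realVec, haR]; field_simp
      · simp [realVec, hbR]; field_simp
  rw [hs] at hmem
  rcases hmem with hm | hm
  · simp only [realVec, Prod.mk_eq_zero, Int.cast_eq_zero] at hm
    exact absurd (Prod.ext (by simp [ha, hm.1]) (by simp [hb, hm.2])) hn
  · simp only [Set.mem_singleton_iff, realVec, Prod.mk.injEq, Int.cast_inj] at hm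
    by_contra hg1
    have h2 : ((g : ℤ) - 1) ≠ 0 := by omega
    have ha0 : a = 0 := by
      have : ((g : ℤ) - 1) * a = 0 := by linarith [hm.1]
      exact (mul_eq_zero.mp this).resolve_left h2
    have hb0 : b = 0 := by
      have : ((g : ℤ) - 1) * b = 0 := by linarith [hm.2]
      exact (mul_eq_zero.mp this).resolve_left h2
    exact hn (Prod.ext (by simp [ha, ha0]) (by simp [hb, hb0]))

lemma isCoprime_act {A : Matrix (Fin 2) (Fin 2) ℤ} (hA : IsUnit A.det) {n : ℤ × ℤ}
    (h : IsCoprime n.1 n.2) : IsCoprime (act A n).1 (act A n).2 := by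
  obtain ⟨x, y, hxy⟩ := h
  obtain ⟨e, he⟩ := hA.exists_left_inv
  -- The covector `(x, y)` composed with `A⁻¹ = e • adj A` takes the value `1` on `A n`.
  refine ⟨e * (x * A 1 1 - y * A 1 0), e * (y * A 0 0 - x * A 0 1), ?_⟩
  rw [Matrix.det_fin_two] at he
  simp only [act]
  linear_combination (x * n.1 + y * n.2) * he + hxy

/-- Primitive lattice points on the same ray are equal. -/
lemma eq_of_real_smul {m v : ℤ × ℤ} (hm : IsCoprime m.1 m.2) (hv : IsCoprime v.1 v.2) {a : ℝ}
    (ha : 0 ≤ a) (h : realVec m = a • realVec v) : m = v := by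
  obtain ⟨x, y, hxy⟩ := hv
  simp only [realVec, Prod.smul_mk, smul_eq_mul, Prod.mk.injEq] at h
  obtain ⟨h1, h2⟩ := h
  have hxyR : (x : ℝ) * v.1 + y * v.2 = 1 := by exact_mod_cast hxy
  -- The factor `a` is an integer by Bézout, and divides both coordinates of `m`.
  obtain ⟨k, hk⟩ : ∃ k : ℤ, a = k := by
    refine ⟨x * m.1 + y * m.2, ?_⟩
    push_cast
    rw [h1, h2]
    linear_combination (-a) * hxyR
  subst hk
  have h1' : m.1 = k * v.1 := by exact_mod_cast h1
  have h2' : m.2 = k * v.2 := by exact_mod_cast h2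
  have hk0 : 0 ≤ k := by exact_mod_cast ha
  have hu : IsUnit k := hm.isUnit_of_dvd' ⟨_, h1'⟩ ⟨_, h2'⟩
  have hk1 : k = 1 := by
    rcases Int.isUnit_iff.mp hu with h | h <;> omega
  subst hk1
  exact Prod.ext (by simpa using h1') (by simpa using h2')

/-! ### Generators of a cone -/

/-- The coefficients in a combination of two independent vectors are unique. -/
lemma coeffs_unique {v w : ℤ × ℤ} (hd : detZ v w ≠ 0) {a b c d : ℝ}
    (h : a • realVec v + b • realVec w = c • realVec v + d • realVec w) : a = c ∧ b = d := by
  have hdR : (v.1 : ℝ) * w.2 - v.2 * w.1 ≠ 0 := by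
    intro h0
    apply hd
    simp only [detZ]
    exact_mod_cast h0
  simp only [realVec, Prod.smul_mk, smul_eq_mul, Prod.mk_add_mk, Prod.mk.injEq] at h
  obtain ⟨h1, h2⟩ := h
  constructor
  · apply mul_right_cancel₀ hdR
    linear_combination (w.2 : ℝ) * h1 - w.1 * h2
  · apply mul_right_cancel₀ hdR
    linear_combination (v.1 : ℝ) * h2 - v.2 * h1

/-- Generators of a pointed planar cone are unique up to order and nonnegative scaling. -/
lemma cone_generators {x y v w : ℤ × ℤ} (hd : detZ v w ≠ 0)
    (h : coneR (realVec x) (realVec y) = coneR (realVec v) (realVec w)) :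
    ∃ a b : ℝ, 0 ≤ a ∧ 0 ≤ b ∧
      ((realVec x = a • realVec v ∧ realVec y = b • realVec w) ∨
       (realVec x = a • realVec w ∧ realVec y = b • realVec v)) := by
  have left : ∀ s t : V, s ∈ coneR s t := fun s t => ⟨1, 0, by norm_num, le_rfl, by simp⟩
  have right : ∀ s t : V, t ∈ coneR s t := fun s t => ⟨0, 1, le_rfl, by norm_num, by simp⟩
  obtain ⟨a, b, ha, hb, hx⟩ := h ▸ left (realVec x) (realVec y)
  obtain ⟨c, d, hc, hd', hy⟩ := h ▸ right (realVec x) (realVec y)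
  obtain ⟨e, f, he, hf, hv⟩ := h.symm ▸ left (realVec v) (realVec w)
  obtain ⟨g, k, hg, hk, hw⟩ := h.symm ▸ right (realVec v) (realVec w)
  -- The two nonnegative coefficient matrices are inverse to each other.
  obtain ⟨h1, h2⟩ := coeffs_unique hd (a := e * a + f * c) (b := e * b + f * d) (c := 1) (d := 0)
    (by rw [one_smul, zero_smul, add_zero]; conv_rhs => rw [hv, hx, hy]
        module)
  obtain ⟨h3, h4⟩ := coeffs_unique hd (a := g * a + k * c) (b := g * b + k * d) (c := 0) (d := 1)
    (by rw [one_smul, zero_smul, zero_add]; conv_rhs => rw [hw, hx, hy]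
        module)
  have heb : e * b = 0 := by nlinarith [mul_nonneg he hb, mul_nonneg hf hd']
  have hfd : f * d = 0 := by nlinarith [mul_nonneg he hb, mul_nonneg hf hd']
  have hkc : k * c = 0 := by nlinarith [mul_nonneg hg ha, mul_nonneg hk hc]
  rcases eq_or_ne e 0 with he0 | he0
  · have hf0 : f ≠ 0 := by rintro rfl; simp [he0] at h1
    have hc0 : c ≠ 0 := by rintro rfl; simp [he0] at h1
    have hd0 : d = 0 := (mul_eq_zero.mp hfd).resolve_left hf0
    have hk0 : k = 0 := (mul_eq_zero.mp hkc).resolve_right hc0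
    have hga : g * a = 0 := by simpa [hk0] using h3
    have hg0 : g ≠ 0 := by rintro rfl; simp [hk0] at h4
    have ha0 : a = 0 := (mul_eq_zero.mp hga).resolve_left hg0
    exact ⟨b, c, hb, hc, Or.inr ⟨by simpa [ha0] using hx, by simpa [hd0] using hy⟩⟩
  · have hb0 : b = 0 := (mul_eq_zero.mp heb).resolve_left he0
    have hk0 : k ≠ 0 := by rintro rfl; simp [hb0] at h4
    have hc0 : c = 0 := (mul_eq_zero.mp hkc).resolve_left hk0
    exact ⟨a, d, ha, hd', Or.inl ⟨by simpa [hb0] using hx, by simpa [hc0] using hy⟩⟩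

/-! ### Prescribing a unimodular matrix on a basis -/

/-- A ℤ-basis can be carried to any pair of determinant `±1` by a unimodular matrix. -/
lemma exists_matrix {u u' w w' : ℤ × ℤ} (hu : IsUnit (detZ u u')) (hw : IsUnit (detZ w w')) :
    ∃ A : Matrix (Fin 2) (Fin 2) ℤ, (A.det = 1 ∨ A.det = -1) ∧ act A u = w ∧ act A u' = w' := by
  obtain ⟨e, he⟩ := hu.exists_left_inv
  -- `A = [w w'] * [u u']⁻¹`
  set A : Matrix (Fin 2) (Fin 2) ℤ :=
    !![e * (w.1 * u'.2 - w'.1 * u.2), e * (w'.1 * u.1 - w.1 * u'.1);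
       e * (w.2 * u'.2 - w'.2 * u.2), e * (w'.2 * u.1 - w.2 * u'.1)] with hA
  have h1 : act A u = w := by
    simp only [detZ] at he
    ext
    · simp [act, hA]; linear_combination w.1 * he
    · simp [act, hA]; linear_combination w.2 * he
  have h2 : act A u' = w' := by
    simp only [detZ] at he
    ext
    · simp [act, hA]; linear_combination w'.1 * he
    · simp [act, hA]; linear_combination w'.2 * he
  refine ⟨A, Int.isUnit_iff.mp ?_, h1, h2⟩
  have h := detZ_act A u u'
  rw [h1, h2] at h
  rw [h] at hw
  exact isUnit_of_mul_isUnit_left hw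

/-! ### The equivalence criterion -/

/-- If an integer multiple `r • v` of a primitive `v` is divisible by `q`, then so is `r`. -/
lemma dvd_of_smul_eq {v w : ℤ × ℤ} (hv : IsCoprime v.1 v.2) {r q : ℤ} (h : r • v = q • w) :
    q ∣ r := by
  obtain ⟨x, y, hxy⟩ := hv
  simp only [Prod.ext_iff, Prod.smul_fst, Prod.smul_snd, smul_eq_mul] at h
  exact ⟨x * w.1 + y * w.2, by linear_combination (-r) * hxy + x * h.1 + y * h.2⟩

/-- **Unimodular equivalence of two-dimensional lattice cones.** -/
theorem cone_unimodular_equivalence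
    (n₁ n₂ n₁' v₁ v₂ v₁' : ℤ × ℤ) (p q p' q' : ℤ)
    (hn₁ : IsPrimitive (realVec n₁)) (hn₂ : IsPrimitive (realVec n₂))
    (hnind : LinearIndependent ℝ ![realVec n₁, realVec n₂])
    (hnbasis : IsZBasis n₁ n₁') (hq : q = |detZ n₁ n₂|)
    (hp0 : 0 ≤ p) (hpq : p < q) (hdec : n₂ = p • n₁ + q • n₁')
    (hv₁ : IsPrimitive (realVec v₁)) (hv₂ : IsPrimitive (realVec v₂))
    (hvind : LinearIndependent ℝ ![realVec v₁, realVec v₂])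
    (hvbasis : IsZBasis v₁ v₁') (hq' : q' = |detZ v₁ v₂|)
    (hp'0 : 0 ≤ p') (hp'q' : p' < q') (hdec' : v₂ = p' • v₁ + q' • v₁') :
    (∃ A : Matrix (Fin 2) (Fin 2) ℤ, (A.det = 1 ∨ A.det = -1) ∧
        mapGL A '' coneR (realVec n₁) (realVec n₂) = coneR (realVec v₁) (realVec v₂))
      ↔ (q = q' ∧ (p = p' ∨ p * p' ≡ 1 [ZMOD q])) := by
  have hun := hnbasis.det_unit
  have huv := hvbasis.det_unit
  have cn₁ := hn₁.isCoprime_s13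
  have cn₂ := hn₂.isCoprime_s13
  have cv₁ := hv₁.isCoprime_s13
  have cv₂ := hv₂.isCoprime_s13
  constructor
  · rintro ⟨A, hA, himg⟩
    have hAu : IsUnit A.det := Int.isUnit_iff.mpr hA
    have hd : detZ v₁ v₂ ≠ 0 := by
      rw [hdec', detZ_combo]
      exact mul_ne_zero (by omega) huv.ne_zero
    rw [mapGL_image_cone] at himg
    have habs : |detZ (act A n₁) (act A n₂)| = q := by
      rw [detZ_act, abs_mul, Int.isUnit_iff_abs_eq.mp hAu, one_mul, hq]
    have hA2 : act A n₂ = p • act A n₁ + q • act A n₁' := by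
      conv_lhs => rw [hdec]
      exact act_combo A p q n₁ n₁'
    obtain ⟨a, b, ha, hb, ⟨h1, h2⟩ | ⟨h1, h2⟩⟩ := cone_generators hd himg
    · have e1 := eq_of_real_smul (isCoprime_act hAu cn₁) cv₁ ha h1
      have e2 := eq_of_real_smul (isCoprime_act hAu cn₂) cv₂ hb h2
      have hqq : q = q' := by rw [hq', ← habs, e1, e2]
      refine ⟨hqq, Or.inl ?_⟩
      rw [e1, e2] at hA2
      have hdvd : q ∣ p - p' := by
        refine dvd_of_smul_eq (w := v₁' - act A n₁') cv₁ ?_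
        have h3 := hdec'.symm.trans hA2
        rw [← hqq] at h3
        rw [sub_smul, smul_sub, sub_eq_sub_iff_add_eq_add, ← h3]
        exact add_comm _ _
      have := Int.eq_zero_of_abs_lt_dvd hdvd (by rw [abs_lt]; constructor <;> omega)
      omega
    · have e1 := eq_of_real_smul (isCoprime_act hAu cn₁) cv₂ ha h1
      have e2 := eq_of_real_smul (isCoprime_act hAu cn₂) cv₁ hb h2
      have hqq : q = q' := by
        rw [hq', ← habs, e1, e2, ← abs_neg]
        congr 1
        simp only [detZ]; ring
      refine ⟨hqq, Or.inr ?_⟩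
      rw [e1, e2, hdec', ← hqq] at hA2
      refine (Int.modEq_iff_dvd.mpr ?_)
      refine dvd_of_smul_eq (w := p • v₁' + act A n₁') cv₁ ?_
      rw [sub_smul, one_smul, sub_eq_iff_eq_add]
      conv_lhs => rw [hA2]
      module
  · rintro ⟨rfl, rfl | hpp⟩
    · obtain ⟨A, hA, h1, h2⟩ := exists_matrix hun huv
      refine ⟨A, hA, ?_⟩
      rw [mapGL_image_cone, hdec, act_combo, h1, h2, ← hdec']
    · obtain ⟨k, hk⟩ := Int.modEq_iff_dvd.mp hpp
      have hw : IsUnit (detZ v₂ (k • v₁ + (-p) • v₁')) := by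
        have : detZ v₂ (k • v₁ + (-p) • v₁') = -detZ v₁ v₁' := by
          rw [hdec']
          simp only [detZ, Prod.fst_add, Prod.snd_add, Prod.smul_fst, Prod.smul_snd, smul_eq_mul]
          linear_combination (v₁.1 * v₁'.2 - v₁.2 * v₁'.1) * hk
        rw [this]
        exact huv.neg
      obtain ⟨A, hA, h1, h2⟩ := exists_matrix hun hw
      refine ⟨A, hA, ?_⟩
      have h3 : act A n₂ = v₁ := by
        rw [hdec, act_combo, h1, h2, hdec']
        have : (1 : ℤ) = p * p' + q * k := by linarith
        conv_rhs => rw [← one_smul ℤ v₁, this]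
        module
      rw [mapGL_image_cone, h1, h3, coneR_comm]
end
end
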